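/- arXiv:1502.07618 — 2 statements merged into one kernel-verified Lean document; each statement's English description precedes it below -/
import Mathlib

section
/- Suppose there exists a non-empty open proper subset U of 𝕊¹ such that U is forward-invariant under the invertible RDS φ and there does not exist any non-empty closed forward-invariant set K⊆𝕊¹∖U. Then φ is stably synchronising if and only if for all x,y∈U, ℙ(ω : d(φ(t,ω)x,φ(t,ω)y)→0 as t→∞)=1. -/
open MeasureTheory Filter Topology Set ENNReal

noncomputable section

/-- The natural projection `π : ℝ → 𝕊¹ = ℝ/ℤ`. -/
def circleProj (x : ℝ) : UnitAddCircle := (x : UnitAddCircle)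

/-- `f` is an orientation-preserving homeomorphism of the circle: it admits a strictly
monotone degree-one lift. -/
def OrientPreserving (f : UnitAddCircle ≃ₜ UnitAddCircle) : Prop :=
  ∃ F : ℝ → ℝ, StrictMono F ∧ (∀ x : ℝ, F (x + 1) = F x + 1) ∧
    ∀ x : ℝ, f (circleProj x) = circleProj (F x)

/-- The anticlockwise distance `d₊(x,y) = min {r ≥ 0 : π(x' + r) = y}` (`x'` any lift of `x`). -/
def dPlus (x y : UnitAddCircle) : ℝ :=
  sInf {r : ℝ | 0 ≤ r ∧ ∃ x' : ℝ, circleProj x' = x ∧ circleProj (x' + r) = y}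

/-- An invertible random dynamical system on the circle, in discrete or continuous time,
driven by a stationary memoryless noise process. -/
structure RDS (Ω : Type) [m : MeasurableSpace Ω] where
  /-- the time set `𝕋⁺`: either `ℕ ∪ {0}` or `[0,∞)`, viewed inside `ℝ` -/
  T : Set ℝ
  T_cases : T = Set.range (fun n : ℕ => (n : ℝ)) ∨ T = Set.Ici (0 : ℝ)
  /-- the filtration -/
  F : ℝ → MeasurableSpace Ω
  F_le : ∀ t ∈ T, F t ≤ m
  F_mono : ∀ s ∈ T, ∀ t ∈ T, s ≤ t → F s ≤ F t
  /-- the probability measure -/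
  P : Measure Ω
  P_prob : IsProbabilityMeasure P
  /-- the time-shift maps on the noise space -/
  θ : ℝ → Ω → Ω
  θ_zero : θ 0 = id
  θ_add : ∀ s ∈ T, ∀ t ∈ T, θ (s + t) = θ t ∘ θ s
  θ_preserving : ∀ t ∈ T, MeasurePreserving (θ t) P P
  θ_adapted : ∀ s ∈ T, ∀ t ∈ T, @Measurable Ω Ω (F (s + t)) (F s) (θ t)
  θ_indep : ∀ t ∈ T, ∀ E A : Set Ω, MeasurableSet[F t] E →
    MeasurableSet[⨆ s ∈ T, F s] A → P (E ∩ θ t ⁻¹' A) = P E * P A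
  /-- the random homeomorphisms -/
  φ : ℝ → Ω → UnitAddCircle ≃ₜ UnitAddCircle
  φ_orient : ∀ t ∈ T, ∀ ω, OrientPreserving (φ t ω)
  φ_meas : ∀ t ∈ T, @Measurable (Ω × UnitAddCircle) UnitAddCircle
    ((F t).prod inferInstance) inferInstance (fun p => φ t p.1 p.2)
  φ_zero : ∀ ω, φ 0 ω = Homeomorph.refl UnitAddCircle
  φ_cocycle : ∀ s ∈ T, ∀ t ∈ T, ∀ ω x, φ (s + t) ω x = φ t (θ s ω) (φ s ω x)
  φ_cadlag_right : ∀ ω, ∀ t ∈ T, ∀ tn : ℕ → ℝ, (∀ n, tn n ∈ T) → Antitone tn →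
    Tendsto tn atTop (𝓝 t) → ∀ (xn : ℕ → UnitAddCircle) (x : UnitAddCircle),
      Tendsto xn atTop (𝓝 x) →
      Tendsto (fun n => φ (tn n) ω (xn n)) atTop (𝓝 (φ t ω x))
  /-- the left-limit maps -/
  φ_left_lim : ℝ → Ω → UnitAddCircle → UnitAddCircle
  φ_cadlag_left : ∀ ω, ∀ t ∈ T, ∀ tn : ℕ → ℝ, (∀ n, tn n ∈ T) → StrictMono tn →
    Tendsto tn atTop (𝓝 t) → ∀ (xn : ℕ → UnitAddCircle) (x : UnitAddCircle),
      Tendsto xn atTop (𝓝 x) →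
      Tendsto (fun n => φ (tn n) ω (xn n)) atTop (𝓝 (φ_left_lim t ω x))

/-- A probability measure on the circle is atomless if every singleton is null. -/
def Atomless (ρ : Measure UnitAddCircle) : Prop := ∀ x, ρ {x} = 0

/-- A measure on the circle has full support. -/
def FullSupport (ρ : Measure UnitAddCircle) : Prop :=
  ∀ U : Set UnitAddCircle, IsOpen U → U.Nonempty → 0 < ρ U

/-- The (topological) support of a measure on the circle. -/
def msupport (ρ : Measure UnitAddCircle) : Set UnitAddCircle :=
  {x | ∀ U : Set UnitAddCircle, IsOpen U → x ∈ U → 0 < ρ U}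

namespace RDS

variable {Ω : Type} [m : MeasurableSpace Ω] (S : RDS Ω)

/-- the future σ-algebra `𝓕₊ = σ(𝓕_t : t ∈ 𝕋⁺)`. -/
def Fplus : MeasurableSpace Ω := ⨆ t ∈ S.T, S.F t

/-- The filter "t → ∞ along the time set 𝕋⁺". -/
def tFilter : Filter ℝ := atTop ⊓ 𝓟 S.T

/-- two-point contractibility. -/
def Contractible : Prop := ∀ x y : UnitAddCircle, x ≠ y →
  0 < S.P {ω | ∃ t ∈ S.T, dist (S.φ t ω x) (S.φ t ω y) < dist x y}

/-- compressibility. -/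
def Compressible : Prop := ∀ x y : UnitAddCircle, x ≠ y →
  0 < S.P {ω | ∃ t ∈ S.T, dPlus (S.φ t ω x) (S.φ t ω y) < dPlus x y}

/-- `p` is a deterministic fixed point. -/
def DetFixedPoint (p : UnitAddCircle) : Prop :=
  ∀ᵐ ω ∂S.P, ∀ t ∈ S.T, S.φ t ω p = p

/-- `A` is forward-invariant. -/
def ForwardInvariant (A : Set UnitAddCircle) : Prop :=
  ∀ᵐ ω ∂S.P, ∀ t ∈ S.T, ⇑(S.φ t ω) '' A ⊆ A

/-- reverse-minimal dynamics: the only open forward-invariant sets are `∅` and `𝕊¹`. -/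
def ReverseMinimal : Prop :=
  ∀ A : Set UnitAddCircle, IsOpen A → S.ForwardInvariant A → A = ∅ ∨ A = Set.univ

/-- synchronisation. -/
def Synchronising : Prop := ∀ x y : UnitAddCircle,
  S.P {ω | Tendsto (fun t => dist (S.φ t ω x) (S.φ t ω y)) S.tFilter (𝓝 0)} = 1

/-- everywhere local stability. -/
def EverywhereLocallyStable : Prop := ∀ x : UnitAddCircle,
  S.P {ω | ∃ U : Set UnitAddCircle, IsOpen U ∧ x ∈ U ∧
    Tendsto (fun t => volume (⇑(S.φ t ω) '' U)) S.tFilter (𝓝 0)} = 1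

/-- stable synchronisation. -/
def StablySynchronising : Prop := S.Synchronising ∧ S.EverywhereLocallyStable

/-- `ρ` is reverse-stationary: `ρ(A) = ∫ ρ(φ(t,ω)A) ℙ(dω)` for all `t ∈ 𝕋⁺`, Borel `A`. -/
def ReverseStationary (ρ : Measure UnitAddCircle) : Prop :=
  ∀ t ∈ S.T, ∀ A : Set UnitAddCircle, MeasurableSet A →
    ρ A = ∫⁻ ω, ρ (⇑(S.φ t ω) '' A) ∂S.P

/-- `r` is a crack point of `ω`. -/
def CrackPoint (ω : Ω) (r : UnitAddCircle) : Prop :=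
  ∀ G : Set UnitAddCircle, IsClosed G → r ∉ G →
    Tendsto (fun t => volume (⇑(S.φ t ω) '' G)) S.tFilter (𝓝 0)

/-- the set of contractive sample points. -/
def Ωc : Set Ω := {ω | ∃ r, S.CrackPoint ω r}

/-- the reverse transition probabilities `φ̄ₓᵗ(A) = ℙ(ω : φ(t,ω)⁻¹(x) ∈ A)`. -/
def revTrans (t : ℝ) (x : UnitAddCircle) (A : Set UnitAddCircle) : ℝ≥0∞ :=
  S.P {ω | (S.φ t ω).symm x ∈ A}

/-- the forward transition probabilities `φₓᵗ(A) = ℙ(ω : φ(t,ω)x ∈ A)`. -/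
def fwdTrans (t : ℝ) (x : UnitAddCircle) (A : Set UnitAddCircle) : ℝ≥0∞ :=
  S.P {ω | S.φ t ω x ∈ A}

/-- `ρ` is stationary for a transition family `ν`. -/
def StationaryFor (ν : ℝ → UnitAddCircle → Set UnitAddCircle → ℝ≥0∞)
    (ρ : Measure UnitAddCircle) : Prop :=
  ∀ t ∈ S.T, ∀ A : Set UnitAddCircle, MeasurableSet A → ρ A = ∫⁻ x, ν t x A ∂ρ

/-- `ρ` is ergodic for a transition family `ν`. -/
def ErgodicFor (ν : ℝ → UnitAddCircle → Set UnitAddCircle → ℝ≥0∞)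
    (ρ : Measure UnitAddCircle) : Prop :=
  S.StationaryFor ν ρ ∧ ∀ A : Set UnitAddCircle, MeasurableSet A →
    (∀ t ∈ S.T, ∀ᵐ x ∂ρ, x ∈ A → ν t x A = 1) → ρ A = 0 ∨ ρ A = 1

end RDS

/-! ### Geometry of arcs -/

lemma dist_proj_le (u v : ℝ) : dist (circleProj u) (circleProj v) ≤ |u - v| := by
  unfold circleProj
  rw [dist_eq_norm, ← AddCircle.coe_sub, UnitAddCircle.norm_eq]
  simpa using round_le (u - v) 0

lemma dist_proj_eq {u v : ℝ} (h : |u - v| ≤ 1 / 2) :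
    dist (circleProj u) (circleProj v) = |u - v| := by
  unfold circleProj
  rw [dist_eq_norm, ← AddCircle.coe_sub]
  exact (AddCircle.norm_coe_eq_abs_iff (1 : ℝ) one_ne_zero).2 (by simpa using h)

lemma circleProj_add_one (u : ℝ) : circleProj (u + 1) = circleProj u := by
  unfold circleProj
  exact AddCircle.coe_add_period 1 u

lemma exists_lift_Ico (a : ℝ) (c : UnitAddCircle) : ∃ c' ∈ Ico a (a + 1), circleProj c' = c := by
  have : Fact ((0 : ℝ) < 1) := ⟨one_pos⟩
  have h := AddCircle.coe_image_Ico_eq (1 : ℝ) a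
  have hc : c ∈ ((↑) : ℝ → AddCircle (1 : ℝ)) '' Ico a (a + 1) := by rw [h]; trivial
  obtain ⟨c', h1, h2⟩ := hc
  exact ⟨c', h1, h2⟩

lemma circleProj_surj (c : UnitAddCircle) : ∃ c', circleProj c' = c := by
  obtain ⟨c', -, h⟩ := exists_lift_Ico 0 c
  exact ⟨c', h⟩

lemma circleProj_continuous : Continuous circleProj := AddCircle.continuous_mk' 1

lemma circleProj_isOpenMap : IsOpenMap circleProj := QuotientAddGroup.isOpenMap_coe

lemma arc_lemma {U : Set UnitAddCircle} {p q : UnitAddCircle} (hp : p ∉ U) (hq : q ∉ U)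
    {f : UnitAddCircle ≃ₜ UnitAddCircle} (hf : OrientPreserving f) (hfU : ⇑f '' U ⊆ U)
    {a b : ℝ} (hJ : ∀ y ∈ Icc a b, circleProj y ∈ U)
    (hd : dist (f (circleProj a)) (f (circleProj b)) < dist p q) :
    ∀ y ∈ Icc a b, dist (f (circleProj y)) (f (circleProj a)) ≤
      dist (f (circleProj a)) (f (circleProj b)) := by
  obtain ⟨F, hF, hF1, hFp⟩ := hf
  intro y hy
  have hab : a ≤ b := hy.1.trans hy.2
  have key : ∀ r, r ∉ U → ∃ r', circleProj r' = r ∧ F b < r' ∧ r' < F a + 1 := by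
    intro r hr
    obtain ⟨c', hc', hc⟩ := exists_lift_Ico a (f.symm r)
    have hbc : b < c' := by
      by_contra hcon
      push Not at hcon
      apply hr
      apply hfU
      refine ⟨f.symm r, ?_, by simp⟩
      rw [← hc]
      exact hJ c' ⟨hc'.1, hcon⟩
    refine ⟨F c', ?_, hF hbc, ?_⟩
    · rw [← hFp, hc]; simp
    · rw [← hF1]; exact hF hc'.2
  obtain ⟨p', hp', hp1, hp2⟩ := key p hp
  obtain ⟨q', hq', hq1, hq2⟩ := key q hq
  have hFab : F a ≤ F b := hF.monotone hab
  have hpq : dist p q ≤ 1 - (F b - F a) := by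
    rw [← hp', ← hq']
    refine (dist_proj_le _ _).trans ?_
    rw [abs_le]; constructor <;> linarith
  rw [hFp a, hFp b] at hd
  rw [hFp a, hFp b, hFp y]
  have hr : dist (circleProj (F a)) (circleProj (F b)) = F b - F a := by
    by_cases h : F b - F a ≤ 1 / 2
    · rw [dist_proj_eq, abs_sub_comm, abs_of_nonneg] <;> try linarith
      rw [abs_sub_comm, abs_of_nonneg] <;> linarith
    · exfalso
      have : dist (circleProj (F a)) (circleProj (F b)) = 1 - (F b - F a) := by
        rw [← circleProj_add_one (F a), dist_proj_eq, abs_of_nonneg] <;> try linarith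
        rw [abs_of_nonneg] <;> linarith
      linarith
  rw [hr]
  refine (dist_proj_le _ _).trans ?_
  have h1 := hF.monotone hy.1
  have h2 := hF.monotone hy.2
  rw [abs_of_nonneg] <;> linarith

lemma exists_arc {U : Set UnitAddCircle} (hU : IsOpen U) {y : UnitAddCircle} (hy : y ∈ U) :
    ∃ a b : ℚ, (∀ z ∈ Icc (a : ℝ) b, circleProj z ∈ U) ∧
      y ∈ circleProj '' Ioo (a : ℝ) b := by
  obtain ⟨y', rfl⟩ := circleProj_surj y
  have ho : IsOpen (circleProj ⁻¹' U) := hU.preimage circleProj_continuous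
  obtain ⟨ε, hε, hb⟩ := Metric.isOpen_iff.1 ho y' hy
  obtain ⟨a, ha1, ha2⟩ := exists_rat_btwn (show y' - ε < y' by linarith)
  obtain ⟨b, hb1, hb2⟩ := exists_rat_btwn (show y' < y' + ε by linarith)
  refine ⟨a, b, fun z hz => hb ?_, y', ⟨ha2, hb1⟩, rfl⟩
  rw [Metric.mem_ball, Real.dist_eq, abs_lt]
  constructor <;> linarith [hz.1, hz.2]

/-! ### Time sets -/
namespace RDS

variable {Ω : Type} [m : MeasurableSpace Ω] (S : RDS Ω)

lemma nat_mem (n : ℕ) : (n : ℝ) ∈ S.T := by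
  rcases S.T_cases with h | h <;> rw [h]
  · exact ⟨n, rfl⟩
  · exact Set.mem_Ici.2 (Nat.cast_nonneg n)

lemma zero_mem : (0 : ℝ) ∈ S.T := by simpa using S.nat_mem 0

lemma add_mem {s t : ℝ} (hs : s ∈ S.T) (ht : t ∈ S.T) : s + t ∈ S.T := by
  rcases S.T_cases with h | h <;> rw [h] at hs ht ⊢
  · obtain ⟨a, rfl⟩ := hs
    obtain ⟨b, rfl⟩ := ht
    exact ⟨a + b, by push_cast; rfl⟩
  · exact Set.mem_Ici.2 (add_nonneg (Set.mem_Ici.1 hs) (Set.mem_Ici.1 ht))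

lemma sub_mem {s t : ℝ} (hs : s ∈ S.T) (ht : t ∈ S.T) (hst : s ≤ t) : t - s ∈ S.T := by
  rcases S.T_cases with h | h <;> rw [h] at hs ht ⊢
  · obtain ⟨a, rfl⟩ := hs
    obtain ⟨b, rfl⟩ := ht
    have : a ≤ b := Nat.cast_le (α := ℝ).1 hst
    exact ⟨b - a, by push_cast [this]; rfl⟩
  · exact sub_nonneg.2 hst

/-- a countable dense set of times -/
def TQ : Set ℝ := S.T ∩ Set.range (fun q : ℚ => (q : ℝ))

lemma TQ_countable : S.TQ.Countable := (Set.countable_range _).mono Set.inter_subset_right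

lemma TQ_approx {t : ℝ} (ht : t ∈ S.T) :
    ∃ tn : ℕ → ℝ, (∀ n, tn n ∈ S.TQ) ∧ Antitone tn ∧ Tendsto tn atTop (𝓝 t) := by
  rcases S.T_cases with h | h
  · refine ⟨fun _ => t, fun _ => ⟨ht, ?_⟩, antitone_const, tendsto_const_nhds⟩
    rw [h] at ht
    obtain ⟨n, rfl⟩ := ht
    exact ⟨n, by simp⟩
  · obtain ⟨u, hu, hu1, hu2⟩ := Real.exists_seq_rat_strictAnti_tendsto t
    refine ⟨fun n => (u n : ℝ), fun n => ⟨?_, ⟨u n, rfl⟩⟩, ?_, hu2⟩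
    · rw [h] at ht ⊢
      exact le_trans ht (hu1 n).le
    · intro i j hij
      show (u j : ℝ) ≤ u i
      exact_mod_cast hu.antitone hij

lemma phi_tendsto (ω : Ω) {t : ℝ} (ht : t ∈ S.T) {tn : ℕ → ℝ} (h1 : ∀ n, tn n ∈ S.TQ)
    (h2 : Antitone tn) (h3 : Tendsto tn atTop (𝓝 t)) (x : UnitAddCircle) :
    Tendsto (fun n => S.φ (tn n) ω x) atTop (𝓝 (S.φ t ω x)) :=
  S.φ_cadlag_right ω t ht tn (fun n => (h1 n).1) h2 h3 (fun _ => x) x tendsto_const_nhds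

lemma tendsto_shift {s : ℝ} (hs : s ∈ S.T) : Tendsto (fun t => t - s) S.tFilter S.tFilter := by
  unfold tFilter
  refine tendsto_inf.2 ⟨?_, ?_⟩
  · exact (tendsto_atTop_add_const_right _ (-s) tendsto_id).mono_left inf_le_left
  · rw [tendsto_principal]
    filter_upwards [mem_inf_of_left (eventually_ge_atTop s),
      mem_inf_of_right (mem_principal_self S.T)] with t h1 h2
    exact S.sub_mem hs h2 h1

lemma eventually_mem : ∀ᶠ t in S.tFilter, t ∈ S.T :=
  mem_inf_of_right (mem_principal_self S.T)

lemma eventually_ge (s : ℝ) : ∀ᶠ t in S.tFilter, s ≤ t :=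
  mem_inf_of_left (eventually_ge_atTop s)

lemma phi_shift {s t : ℝ} (hs : s ∈ S.T) (ht : t ∈ S.T) (hst : s ≤ t) (ω : Ω)
    (x : UnitAddCircle) : S.φ t ω x = S.φ (t - s) (S.θ s ω) (S.φ s ω x) := by
  rw [← S.φ_cocycle s hs (t - s) (S.sub_mem hs ht hst)]
  simp

lemma phi_measF {t : ℝ} (ht : t ∈ S.T) (x : UnitAddCircle) :
    Measurable[S.F t] (fun ω => S.φ t ω x) := by
  have h := S.φ_meas t ht
  exact h.comp (measurable_prodMk_right (m := S.F t))

lemma phi_measurable {t : ℝ} (ht : t ∈ S.T) (x : UnitAddCircle) :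
    Measurable (fun ω => S.φ t ω x) :=
  (S.phi_measF ht x).mono (S.F_le t ht) le_rfl

/-- the synchronisation event -/
def sync (x y : UnitAddCircle) : Set Ω :=
  {ω | Tendsto (fun t => dist (S.φ t ω x) (S.φ t ω y)) S.tFilter (𝓝 0)}

lemma mem_sync_iff (x y : UnitAddCircle) (ω : Ω) : ω ∈ S.sync x y ↔
    ∀ k : ℕ, ∃ N : ℕ, ∀ t ∈ S.TQ, (N : ℝ) ≤ t →
      dist (S.φ t ω x) (S.φ t ω y) ≤ 1 / ((k : ℝ) + 1) := by
  constructor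
  · intro h k
    have h1 : ∀ᶠ t in S.tFilter, dist (S.φ t ω x) (S.φ t ω y) < 1 / ((k : ℝ) + 1) :=
      (tendsto_order.1 h).2 _ Nat.one_div_pos_of_nat
    rw [tFilter, eventually_inf_principal, eventually_atTop] at h1
    obtain ⟨a, ha⟩ := h1
    obtain ⟨N, hN⟩ := exists_nat_ge a
    exact ⟨N, fun t ht hNt => (ha t (hN.trans hNt) ht.1).le⟩
  · intro h
    refine tendsto_order.2 ⟨fun a ha => Eventually.of_forall fun t => ha.trans_le dist_nonneg, ?_⟩
    intro ε hε
    obtain ⟨k, hk⟩ := exists_nat_one_div_lt hε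
    obtain ⟨N, hN⟩ := h k
    filter_upwards [S.eventually_mem, S.eventually_ge N] with t ht hNt
    refine lt_of_le_of_lt ?_ hk
    obtain ⟨tn, h1, h2, h3⟩ := S.TQ_approx ht
    refine le_of_tendsto ((S.phi_tendsto ω ht h1 h2 h3 x).dist (S.phi_tendsto ω ht h1 h2 h3 y))
      (Eventually.of_forall fun n => hN _ (h1 n) (hNt.trans (h2.le_of_tendsto h3 n)))

lemma sync_measurable (x y : UnitAddCircle) : MeasurableSet (S.sync x y) := by
  have : S.sync x y = ⋂ k : ℕ, ⋃ N : ℕ, ⋂ t ∈ S.TQ, {ω | (N : ℝ) ≤ t →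
      dist (S.φ t ω x) (S.φ t ω y) ≤ 1 / ((k : ℝ) + 1)} := by
    ext ω
    rw [mem_sync_iff]
    simp
  rw [this]
  refine MeasurableSet.iInter fun k => MeasurableSet.iUnion fun N =>
    MeasurableSet.biInter S.TQ_countable fun t ht => ?_
  by_cases h : (N : ℝ) ≤ t
  · simp only [h, forall_const]
    exact measurableSet_le ((S.phi_measurable ht.1 x).dist (S.phi_measurable ht.1 y))
      measurable_const
  · simp [h]

end RDS

/-! ### Independence -/

lemma lintegral_indep {Ω C Ω' : Type} [MeasurableSpace Ω] [MeasurableSpace C]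
    [MeasurableSpace Ω'] (P : Measure Ω) [IsProbabilityMeasure P] (ν : Measure Ω')
    [IsProbabilityMeasure ν] {X : Ω → C} {Y : Ω → Ω'} (hX : Measurable X) (hY : Measurable Y)
    (h : ∀ A B, MeasurableSet A → MeasurableSet B →
      P (X ⁻¹' A ∩ Y ⁻¹' B) = P (X ⁻¹' A) * ν B)
    {f : C × Ω' → ℝ≥0∞} (hf : Measurable f) :
    ∫⁻ ω, f (X ω, Y ω) ∂P = ∫⁻ ω, ∫⁻ ω', f (X ω, ω') ∂ν ∂P := by
  have : IsProbabilityMeasure (P.map X) := Measure.isProbabilityMeasure_map hX.aemeasurable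
  have hprod : (P.map X).prod ν = P.map (fun ω => (X ω, Y ω)) := by
    refine Measure.prod_eq fun A B hA hB => ?_
    rw [Measure.map_apply (hX.prodMk hY) (hA.prod hB), Measure.map_apply hX hA, ← h A B hA hB]
    rfl
  rw [← lintegral_map hf (hX.prodMk hY), ← hprod, lintegral_prod _ hf.aemeasurable,
    lintegral_map hf.lintegral_prod_right' hX]

namespace RDS

variable {Ω : Type} [m : MeasurableSpace Ω] (S : RDS Ω)

lemma phi_aux {Ω : Type} (m' : MeasurableSpace Ω)
    {f : UnitAddCircle × UnitAddCircle → ℝ≥0∞} (hf : Measurable f)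
    {g : Ω → UnitAddCircle → UnitAddCircle}
    (hg : Measurable (fun p : Ω × UnitAddCircle => g p.1 p.2)) :
    Measurable (fun p : UnitAddCircle × Ω => f (p.1, g p.2 p.1)) :=
  hf.comp (measurable_fst.prodMk (hg.comp measurable_swap))

lemma markov {s t : ℝ} (hs : s ∈ S.T) (ht : t ∈ S.T) (x : UnitAddCircle)
    {f : UnitAddCircle × UnitAddCircle → ℝ≥0∞} (hf : Measurable f) :
    ∫⁻ ω, f (S.φ t ω x, S.φ (t + s) ω x) ∂S.P =
      ∫⁻ ω, ∫⁻ ω', f (S.φ t ω x, S.φ s ω' (S.φ t ω x)) ∂S.P ∂S.P := by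
  have := S.P_prob
  have hle := S.F_le s hs
  have : IsProbabilityMeasure (S.P.trim hle) :=
    ⟨by rw [trim_measurableSet_eq hle MeasurableSet.univ, measure_univ]⟩
  have hg : @Measurable _ _ (@Prod.instMeasurableSpace _ _ _ (S.F s)) _
      (fun p : UnitAddCircle × Ω => f (p.1, S.φ s p.2 p.1)) := by
    exact phi_aux (S.F s) hf (g := fun ω z => S.φ s ω z) (S.φ_meas s hs)
  have := @lintegral_indep Ω UnitAddCircle Ω m _ (S.F s) S.P _ (S.P.trim hle) _
    (fun ω => S.φ t ω x) (S.θ t) (S.phi_measurable ht x)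
    ((S.θ_preserving t ht).measurable.mono le_rfl hle) ?_ _ hg
  · simp only at this
    simp only [S.φ_cocycle t ht s hs]
    rw [this]
    congr 1
    ext ω
    rw [lintegral_trim]
    exact hg.comp (@measurable_prodMk_left _ _ _ (S.F s) _)
  · intro A B hA hB
    rw [trim_measurableSet_eq hle hB]
    refine S.θ_indep t ht _ _ (S.phi_measF ht x hA) ?_
    exact (le_iSup₂_of_le (f := fun s (_ : s ∈ S.T) => S.F s) s hs le_rfl) B hB

/-- hitting probability of `U` at time `s` -/
def hit (U : Set UnitAddCircle) (s : ℝ) (z : UnitAddCircle) : ℝ≥0∞ := S.P {ω | S.φ s ω z ∈ U}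

variable {U : Set UnitAddCircle}

lemma ae_step (hUinv : S.ForwardInvariant U) {s r : ℝ} (hs : s ∈ S.T) (hr : r ∈ S.T)
    (z : UnitAddCircle) : ∀ᵐ ω ∂S.P, S.φ s ω z ∈ U → S.φ (s + r) ω z ∈ U := by
  filter_upwards [(S.θ_preserving s hs).quasiMeasurePreserving.ae hUinv] with ω hω h
  rw [S.φ_cocycle s hs r hr]
  exact hω r hr ⟨_, h, rfl⟩

lemma hit_mono (hUinv : S.ForwardInvariant U) {s t : ℝ} (hs : s ∈ S.T) (ht : t ∈ S.T)
    (hst : s ≤ t) (z : UnitAddCircle) : S.hit U s z ≤ S.hit U t z := by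
  refine measure_mono_ae ?_
  filter_upwards [S.ae_step hUinv hs (S.sub_mem hs ht hst) z] with ω hω
  intro h
  have := hω h
  rwa [add_sub_cancel] at this

lemma hit_isClosed (hU : IsOpen U) {s : ℝ} (hs : s ∈ S.T) (c : ℝ≥0∞) :
    IsClosed {z | S.hit U s z ≤ c} := by
  refine IsSeqClosed.isClosed fun zn z hzn hz => ?_
  have hm : ∀ y, MeasurableSet {ω | S.φ s ω y ∈ U} := fun y =>
    S.phi_measurable hs y hU.measurableSet
  have h1 : ∀ y, S.hit U s y = ∫⁻ ω, {ω | S.φ s ω y ∈ U}.indicator 1 ω ∂S.P := fun y =>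
    (lintegral_indicator_one (hm y)).symm
  change S.hit U s z ≤ c
  calc S.hit U s z ≤ ∫⁻ ω, liminf (fun n => {ω | S.φ s ω (zn n) ∈ U}.indicator 1 ω) atTop ∂S.P := by
        rw [h1]
        refine lintegral_mono fun ω => ?_
        by_cases h : S.φ s ω z ∈ U
        · have h2 : ∀ᶠ n in atTop, S.φ s ω (zn n) ∈ U :=
            ((S.φ s ω).continuous.tendsto z).comp hz (hU.mem_nhds h)
          have h3 : liminf (fun n => {ω | S.φ s ω (zn n) ∈ U}.indicator
              (1 : Ω → ℝ≥0∞) ω) atTop = 1 := by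
            refine Tendsto.liminf_eq (tendsto_const_nhds.congr' ?_)
            filter_upwards [h2] with n hn
            simp [hn]
          rw [h3]
          simp [h]
        · simp [h]
    _ ≤ liminf (fun n => S.hit U s (zn n)) atTop := by
        simp only [h1]
        exact lintegral_liminf_le fun n => measurable_one.indicator (hm _)
    _ ≤ c := by
        refine (liminf_le_liminf (Eventually.of_forall hzn)).trans ?_
        simp

/-- the set of points that never hit `U` -/
def Knever (U : Set UnitAddCircle) : Set UnitAddCircle := {z | ∀ n : ℕ, S.hit U n z ≤ 0}

lemma Knever_isClosed (hU : IsOpen U) : IsClosed (S.Knever U) := by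
  rw [Knever, ofPred_forall]
  exact isClosed_iInter fun n => S.hit_isClosed hU (S.nat_mem n) 0

lemma Knever_subset : S.Knever U ⊆ Uᶜ := by
  intro z hz hzU
  have := S.P_prob
  have := hz 0
  simp [hit, S.φ_zero, hzU] at this

lemma Knever_ae (hU : IsOpen U) (hUinv : S.ForwardInvariant U) {t : ℝ} (ht : t ∈ S.T)
    {x : UnitAddCircle} (hx : x ∈ S.Knever U) : ∀ᵐ ω ∂S.P, S.φ t ω x ∈ S.Knever U := by
  have key : ∀ n : ℕ, ∀ᵐ ω ∂S.P, S.hit U n (S.φ t ω x) ≤ 0 := by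
    intro n
    have hn := S.nat_mem n
    have htn := S.add_mem ht hn
    obtain ⟨N, hN⟩ := exists_nat_ge (t + n)
    have h0 : S.hit U (t + n) x = 0 :=
      le_antisymm ((S.hit_mono hUinv htn (S.nat_mem N) hN x).trans (hx N)) bot_le
    have hmk := S.markov hn ht x (f := fun p => U.indicator 1 p.2)
      ((measurable_one.indicator hU.measurableSet).comp measurable_snd)
    have e : ∀ (s : ℝ) (hs : s ∈ S.T) (y : UnitAddCircle),
        ∫⁻ ω, U.indicator (1 : UnitAddCircle → ℝ≥0∞) (S.φ s ω y) ∂S.P = S.hit U s y := by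
      intro s hs y
      exact lintegral_indicator_one (S.phi_measurable hs y hU.measurableSet)
    simp only [e _ htn, e _ hn] at hmk
    rw [h0] at hmk
    have hmeas : Measurable (fun z => S.hit U n z) := by
      refine measurable_of_Iic fun c => (S.hit_isClosed hU hn c).measurableSet
    have := (lintegral_eq_zero_iff (hmeas.comp (S.phi_measurable ht x))).1 hmk.symm
    filter_upwards [this] with ω hω
    exact hω.le
  filter_upwards [ae_all_iff.2 key] with ω hω
  exact hω

lemma Knever_invariant (hU : IsOpen U) (hUinv : S.ForwardInvariant U) :
    S.ForwardInvariant (S.Knever U) := by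
  obtain ⟨D, hDK, hDc, hD⟩ := (TopologicalSpace.IsSeparable.of_separableSpace
    (S.Knever U)).exists_countable_dense_subset
  have h1 : ∀ᵐ ω ∂S.P, ∀ t ∈ S.TQ, ∀ x ∈ D, S.φ t ω x ∈ S.Knever U := by
    rw [ae_ball_iff S.TQ_countable]
    intro t ht
    rw [ae_ball_iff hDc]
    intro x hx
    exact S.Knever_ae hU hUinv ht.1 (hDK hx)
  have hcl := S.Knever_isClosed hU
  filter_upwards [h1] with ω hω t ht
  rintro _ ⟨x, hx, rfl⟩
  obtain ⟨tn, h1, h2, h3⟩ := S.TQ_approx ht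
  refine hcl.mem_of_tendsto (S.phi_tendsto ω ht h1 h2 h3 x) (Eventually.of_forall fun n => ?_)
  have hc : IsClosed ((S.φ (tn n) ω) ⁻¹' (S.Knever U)) := hcl.preimage (S.φ (tn n) ω).continuous
  exact closure_minimal (fun y hy => hω _ (h1 n) y hy) hc (hD hx)

lemma hit_uniform (hU : IsOpen U) (hUinv : S.ForwardInvariant U) (hK : S.Knever U = ∅) :
    ∃ n : ℕ, ∃ c : ℝ≥0∞, 0 < c ∧ ∀ z, c ≤ S.hit U n z := by
  have hmono : Monotone (fun n : ℕ => {z | S.hit U n z ≤ ((n : ℝ≥0∞) + 1)⁻¹}ᶜ) := by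
    intro i j hij z hz
    simp only [mem_compl_iff, mem_ofPred_eq, not_le] at hz ⊢
    refine lt_of_le_of_lt ?_ (hz.trans_le
      (S.hit_mono hUinv (S.nat_mem i) (S.nat_mem j) (by exact_mod_cast hij) z))
    gcongr
  have hcov : (univ : Set UnitAddCircle) ⊆
      ⋃ n : ℕ, {z | S.hit U n z ≤ ((n : ℝ≥0∞) + 1)⁻¹}ᶜ := by
    intro z _
    have hz : z ∉ S.Knever U := by simp [hK]
    simp only [Knever, mem_ofPred_eq, not_forall, not_le] at hz
    obtain ⟨k, hk⟩ := hz
    obtain ⟨N, hN⟩ := ENNReal.exists_inv_nat_lt hk.ne'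
    refine mem_iUnion.2 ⟨max k N, ?_⟩
    simp only [mem_compl_iff, mem_ofPred_eq, not_le]
    refine lt_of_le_of_lt ?_ (hN.trans_le (S.hit_mono hUinv (S.nat_mem k)
      (S.nat_mem (max k N)) (by exact_mod_cast le_max_left k N) z))
    rw [ENNReal.inv_le_inv]
    have : (N : ℝ≥0∞) ≤ ((max k N : ℕ) : ℝ≥0∞) := by exact_mod_cast le_max_right k N
    exact this.trans le_self_add
  obtain ⟨n, hn⟩ := isCompact_univ.elim_directed_cover
    (fun n : ℕ => {z | S.hit U n z ≤ ((n : ℝ≥0∞) + 1)⁻¹}ᶜ)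
    (fun n => (S.hit_isClosed hU (S.nat_mem n) _).isOpen_compl) hcov hmono.directed_le
  · refine ⟨n, ((n : ℝ≥0∞) + 1)⁻¹, by simp, fun z => ?_⟩
    have := hn (mem_univ z)
    simp only [mem_compl_iff, mem_ofPred_eq, not_le] at this
    exact this.le

lemma ae_hits (hU : IsOpen U) (hUinv : S.ForwardInvariant U) (hK : S.Knever U = ∅)
    (x : UnitAddCircle) : ∀ᵐ ω ∂S.P, ∃ k : ℕ, S.φ k ω x ∈ U := by
  have := S.P_prob
  obtain ⟨n, c, hc, hcz⟩ := S.hit_uniform hU hUinv hK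
  have hn := S.nat_mem n
  have hUc : MeasurableSet Uᶜ := hU.measurableSet.compl
  have hmeas : ∀ {s : ℝ}, s ∈ S.T → ∀ y, MeasurableSet {ω | S.φ s ω y ∈ Uᶜ} := fun hs y =>
    S.phi_measurable hs y hUc
  have step : ∀ t ∈ S.T, S.P {ω | S.φ (t + n) ω x ∈ Uᶜ} ≤ (1 - c) * S.P {ω | S.φ t ω x ∈ Uᶜ} := by
    intro t ht
    have htn := S.add_mem ht hn
    have hmk := S.markov hn ht x
      (f := fun p => Uᶜ.indicator 1 p.1 * Uᶜ.indicator 1 p.2)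
      (((measurable_one.indicator hUc).comp measurable_fst).mul
        ((measurable_one.indicator hUc).comp measurable_snd))
    calc S.P {ω | S.φ (t + n) ω x ∈ Uᶜ}
        = ∫⁻ ω, {ω | S.φ (t + n) ω x ∈ Uᶜ}.indicator 1 ω ∂S.P :=
          (lintegral_indicator_one (hmeas htn x)).symm
      _ ≤ ∫⁻ ω, Uᶜ.indicator 1 (S.φ t ω x) * Uᶜ.indicator 1 (S.φ (t + n) ω x) ∂S.P := by
          refine lintegral_mono_ae ?_
          filter_upwards [S.ae_step hUinv ht hn x] with ω hω
          by_cases h : S.φ (t + n) ω x ∈ U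
          · simp [h]
          · have : S.φ t ω x ∉ U := fun h' => h (hω h')
            simp [h, this]
      _ = ∫⁻ ω, ∫⁻ ω', Uᶜ.indicator 1 (S.φ t ω x) *
            Uᶜ.indicator 1 (S.φ n ω' (S.φ t ω x)) ∂S.P ∂S.P := hmk
      _ ≤ ∫⁻ ω, (1 - c) * {ω | S.φ t ω x ∈ Uᶜ}.indicator 1 ω ∂S.P := by
          refine lintegral_mono fun ω => ?_
          have hm2 : Measurable (fun ω' => Uᶜ.indicator (1 : UnitAddCircle → ℝ≥0∞)
              (S.φ n ω' (S.φ t ω x))) :=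
            (measurable_one.indicator hUc).comp (S.phi_measurable hn _)
          simp only
          rw [lintegral_const_mul _ hm2, mul_comm]
          have h4 : ∫⁻ ω', Uᶜ.indicator (1 : UnitAddCircle → ℝ≥0∞)
              (S.φ n ω' (S.φ t ω x)) ∂S.P = S.P {ω' | S.φ n ω' (S.φ t ω x) ∈ U}ᶜ := by
            exact lintegral_indicator_one (hmeas hn _)
          have h5 : S.P {ω' | S.φ n ω' (S.φ t ω x) ∈ U}ᶜ = 1 - S.hit U n (S.φ t ω x) :=
            prob_compl_eq_one_sub (S.phi_measurable hn _ hU.measurableSet)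
          rw [h4, h5]
          exact mul_le_mul' (tsub_le_tsub_left (hcz _) 1) le_rfl
      _ = (1 - c) * S.P {ω | S.φ t ω x ∈ Uᶜ} := by
          rw [lintegral_const_mul _ (measurable_one.indicator (hmeas ht x)),
            lintegral_indicator_one (hmeas ht x)]
  have geo : ∀ k : ℕ, S.P {ω | S.φ ((k * n : ℕ) : ℝ) ω x ∈ Uᶜ} ≤ (1 - c) ^ k := by
    intro k
    induction k with
    | zero => simpa using prob_le_one
    | succ k ih =>
      have := step _ (S.nat_mem (k * n))
      rw [show (((k + 1) * n : ℕ) : ℝ) = ((k * n : ℕ) : ℝ) + n by push_cast; ring, pow_succ']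
      exact this.trans (mul_le_mul' le_rfl ih)
  have hlim : Tendsto (fun k : ℕ => (1 - c) ^ k) atTop (𝓝 0) := by
    apply ENNReal.tendsto_pow_atTop_nhds_zero_of_lt_one
    exact ENNReal.sub_lt_self one_ne_top one_ne_zero hc.ne'
  rw [ae_iff]
  refine le_antisymm (ge_of_tendsto' hlim fun k => (measure_mono ?_).trans (geo k)) bot_le
  intro ω hω
  simp only [not_exists, mem_ofPred_eq] at hω
  exact hω (k * n)

/-- good sample points -/
def Good (U : Set UnitAddCircle) (ω : Ω) : Prop :=
  (∀ t ∈ S.T, ⇑(S.φ t ω) '' U ⊆ U) ∧ ∀ a b : ℚ, circleProj a ∈ U → circleProj b ∈ U →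
    ω ∈ S.sync (circleProj a) (circleProj b)

lemma good_arc {p q : UnitAddCircle} (hp : p ∉ U) (hq : q ∉ U) (hpq : p ≠ q) {ω : Ω}
    (hω : S.Good U ω) {a b : ℚ} (hab : (a : ℝ) ≤ b)
    (hJ : ∀ z ∈ Icc (a : ℝ) b, circleProj z ∈ U) :
    ∀ᶠ t in S.tFilter, ∀ z ∈ Icc (a : ℝ) b,
      dist (S.φ t ω (circleProj z)) (S.φ t ω (circleProj a)) ≤
        dist (S.φ t ω (circleProj a)) (S.φ t ω (circleProj b)) := by
  have h := hω.2 a b (hJ _ ⟨le_rfl, hab⟩) (hJ _ ⟨hab, le_rfl⟩)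
  filter_upwards [S.eventually_mem, (tendsto_order.1 h).2 _ (dist_pos.2 hpq)] with t ht hd
  exact arc_lemma hp hq (S.φ_orient t ht ω) (hω.1 t ht) hJ hd

lemma good_stable (hU : IsOpen U) {p q : UnitAddCircle} (hp : p ∉ U) (hq : q ∉ U)
    (hpq : p ≠ q) {ω : Ω} (hω : S.Good U ω) {y : UnitAddCircle} (hy : y ∈ U) :
    ∃ a : ℚ, circleProj a ∈ U ∧ y ∈ U ∧ ω ∈ S.sync y (circleProj a) ∧
    ∃ V : Set UnitAddCircle, IsOpen V ∧ y ∈ V ∧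
      Tendsto (fun t => volume (⇑(S.φ t ω) '' V)) S.tFilter (𝓝 0) := by
  obtain ⟨a, b, hJ, y', hy', rfl⟩ := exists_arc hU hy
  have hab : (a : ℝ) ≤ b := hy'.1.le.trans hy'.2.le
  have hev := S.good_arc hp hq hpq hω hab hJ
  have h := hω.2 a b (hJ _ ⟨le_rfl, hab⟩) (hJ _ ⟨hab, le_rfl⟩)
  refine ⟨a, hJ _ ⟨le_rfl, hab⟩, hy, ?_, circleProj '' Ioo (a : ℝ) b,
    circleProj_isOpenMap _ isOpen_Ioo, ⟨y', hy', rfl⟩, ?_⟩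
  · refine tendsto_of_tendsto_of_tendsto_of_le_of_le' tendsto_const_nhds h
      (Eventually.of_forall fun t => dist_nonneg) ?_
    filter_upwards [hev] with t ht
    exact ht y' ⟨hy'.1.le, hy'.2.le⟩
  · have h2 : Tendsto (fun t => ENNReal.ofReal (2 * dist (S.φ t ω (circleProj a))
        (S.φ t ω (circleProj b)))) S.tFilter (𝓝 0) := by
      have := ENNReal.tendsto_ofReal (Tendsto.const_mul (2 : ℝ) h)
      simpa using this
    refine tendsto_of_tendsto_of_tendsto_of_le_of_le' tendsto_const_nhds h2
      (Eventually.of_forall fun t => bot_le) ?_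
    filter_upwards [hev] with t ht
    have hsub : ⇑(S.φ t ω) '' (circleProj '' Ioo (a : ℝ) b) ⊆
        Metric.closedBall (S.φ t ω (circleProj a))
          (dist (S.φ t ω (circleProj a)) (S.φ t ω (circleProj b))) := by
      rintro _ ⟨_, ⟨z, hz, rfl⟩, rfl⟩
      exact ht z ⟨hz.1.le, hz.2.le⟩
    refine (measure_mono hsub).trans ?_
    have : Fact ((0 : ℝ) < 1) := ⟨one_pos⟩
    rw [AddCircle.volume_closedBall]
    exact ENNReal.ofReal_le_ofReal (min_le_right _ _)

lemma good_sync (hU : IsOpen U) {p q : UnitAddCircle} (hp : p ∉ U) (hq : q ∉ U)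
    (hpq : p ≠ q) {ω : Ω} (hω : S.Good U ω) {y z : UnitAddCircle} (hy : y ∈ U) (hz : z ∈ U) :
    ω ∈ S.sync y z := by
  obtain ⟨a, ha, -, h1, -⟩ := S.good_stable hU hp hq hpq hω hy
  obtain ⟨b, hb, -, h2, -⟩ := S.good_stable hU hp hq hpq hω hz
  have h3 := hω.2 a b ha hb
  have h4 := (h1.add h3).add h2
  simp only [add_zero] at h4
  refine tendsto_of_tendsto_of_tendsto_of_le_of_le tendsto_const_nhds h4
    (fun t => dist_nonneg) (fun t => ?_)
  simp only
  rw [dist_comm (S.φ t ω z)]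
  exact dist_triangle4 _ _ _ _

end RDS

/-- if `U` is a non-empty open proper forward-invariant subset with no non-empty
closed forward-invariant set in its complement, then `φ` is stably synchronising iff all pairs
of points of `U` synchronise almost surely. -/
theorem stablySynchronising_iff_synchronisation_within_U
    {Ω : Type} [MeasurableSpace Ω] (S : RDS Ω) (U : Set UnitAddCircle)
    (hUopen : IsOpen U) (hUne : U.Nonempty) (hUproper : U ≠ Set.univ)
    (hUinv : S.ForwardInvariant U)
    (hnoK : ¬ ∃ K : Set UnitAddCircle, K.Nonempty ∧ IsClosed K ∧ K ⊆ Uᶜ ∧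
      S.ForwardInvariant K) :
    S.StablySynchronising ↔ ∀ x ∈ U, ∀ y ∈ U,
      S.P {ω | Tendsto (fun t => dist (S.φ t ω x) (S.φ t ω y)) S.tFilter (𝓝 0)} = 1 := by
  have := S.P_prob
  constructor
  · intro h x _ y _
    exact h.1 x y
  intro h
  have hK : S.Knever U = ∅ := by
    by_contra hne
    exact hnoK ⟨_, nonempty_iff_ne_empty.2 hne, S.Knever_isClosed hUopen, S.Knever_subset,
      S.Knever_invariant hUopen hUinv⟩
  obtain ⟨p, hp⟩ : ∃ p, p ∉ U := (ne_univ_iff_exists_notMem U).1 hUproper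
  obtain ⟨q, hq, hpq⟩ : ∃ q, q ∉ U ∧ p ≠ q := by
    by_contra hcon
    push Not at hcon
    refine hnoK ⟨{p}, singleton_nonempty p, isClosed_singleton, by simpa using hp, ?_⟩
    filter_upwards [hUinv] with ω hω t ht
    have h1 : (S.φ t ω).symm p ∉ U := fun h' => hp (hω t ht ⟨_, h', by simp⟩)
    have h2 := hcon _ h1
    rintro _ ⟨_, rfl, rfl⟩
    rw [mem_singleton_iff]
    conv_lhs => rw [h2]
    simp
  have hgood : ∀ᵐ ω ∂S.P, S.Good U ω := by
    have h1 : ∀ᵐ ω ∂S.P, ∀ a b : ℚ, circleProj a ∈ U → circleProj b ∈ U →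
        ω ∈ S.sync (circleProj a) (circleProj b) := by
      rw [ae_all_iff]; intro a
      rw [ae_all_iff]; intro b
      by_cases ha : circleProj a ∈ U
      · by_cases hb : circleProj b ∈ U
        · have := (mem_ae_iff_prob_eq_one (S.sync_measurable _ _)).2 (h _ ha _ hb)
          filter_upwards [this] with ω hω _ _
          exact hω
        · exact Eventually.of_forall fun _ _ h' => absurd h' hb
      · exact Eventually.of_forall fun _ h' => absurd h' ha
    filter_upwards [hUinv, h1] with ω a b
    exact ⟨a, b⟩
  have hgood' : ∀ᵐ ω ∂S.P, ∀ k : ℕ, S.Good U (S.θ k ω) := ae_all_iff.2 fun k =>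
    (S.θ_preserving k (S.nat_mem k)).quasiMeasurePreserving.ae hgood
  have full : ∀ A : Set Ω, (∀ᵐ ω ∂S.P, ω ∈ A) → S.P A = 1 := by
    intro A hA
    have : S.P A = S.P univ := measure_congr (eventuallyEq_univ.2 hA)
    rw [this, measure_univ]
  constructor
  · intro x y
    apply full
    filter_upwards [hgood, hgood', hUinv, S.ae_hits hUopen hUinv hK x,
      S.ae_hits hUopen hUinv hK y] with ω h1 h2 h3 ⟨k, hk⟩ ⟨l, hl⟩
    have stay : ∀ (z : UnitAddCircle) (i j : ℕ), i ≤ j → S.φ i ω z ∈ U → S.φ j ω z ∈ U := by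
      intro z i j hij hi
      rw [S.phi_shift (S.nat_mem i) (S.nat_mem j) (by exact_mod_cast hij)]
      exact (h2 i).1 _ (S.sub_mem (S.nat_mem i) (S.nat_mem j) (by exact_mod_cast hij))
        ⟨_, hi, rfl⟩
    have hN := S.nat_mem (max k l)
    have hs := S.good_sync hUopen hp hq hpq (h2 (max k l))
      (stay x k _ (le_max_left k l) hk) (stay y l _ (le_max_right k l) hl)
    refine (Tendsto.comp hs (S.tendsto_shift hN)).congr' ?_
    filter_upwards [S.eventually_mem, S.eventually_ge (max k l : ℕ)] with t ht hge
    rw [S.phi_shift hN ht hge, S.phi_shift hN ht hge ω y]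
    rfl
  · intro x
    apply full
    filter_upwards [hgood', S.ae_hits hUopen hUinv hK x] with ω h2 ⟨k, hk⟩
    have hN := S.nat_mem k
    obtain ⟨-, -, -, -, V, hV, hxV, hlim⟩ := S.good_stable hUopen hp hq hpq (h2 k) hk
    refine ⟨S.φ k ω ⁻¹' V, hV.preimage (S.φ k ω).continuous, hxV, ?_⟩
    refine (Tendsto.comp hlim (S.tendsto_shift hN)).congr' ?_
    filter_upwards [S.eventually_mem, S.eventually_ge k] with t ht hge
    have hset : ⇑(S.φ t ω) '' (S.φ k ω ⁻¹' V) = ⇑(S.φ (t - k) (S.θ k ω)) '' V := by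
      ext w
      constructor
      · rintro ⟨z, hz, rfl⟩
        exact ⟨_, hz, (S.phi_shift hN ht hge ω z).symm⟩
      · rintro ⟨v, hv, rfl⟩
        refine ⟨(S.φ k ω).symm v, by simpa using hv, ?_⟩
        rw [S.phi_shift hN ht hge]
        simp
    rw [hset]
    rfl
end
end

section
/- Suppose the invertible RDS φ on 𝕊¹ is contractible and admits a reverse-stationary probability measure ρ that is atomless and has full support. Then φ is synchronising. -/
open MeasureTheory Filter Topology Set ENNReal

noncomputable section

set_option linter.unusedSectionVars false

namespace CircleAux

/-- half-open arc. -/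
def arc (a b : ℝ) : Set UnitAddCircle := circleProj '' Ioc a b

lemma proj_eq_iff {x y : ℝ} : circleProj x = circleProj y ↔ ∃ n : ℤ, x = y + n := by
  unfold circleProj
  rw [← sub_eq_zero, ← AddCircle.coe_sub, AddCircle.coe_eq_zero_iff]
  constructor
  · rintro ⟨n, hn⟩
    refine ⟨n, ?_⟩
    simp at hn
    linarith
  · rintro ⟨n, hn⟩
    refine ⟨n, ?_⟩
    simp [hn]

lemma proj_surj (u : UnitAddCircle) : ∃ x : ℝ, circleProj x = u :=
  QuotientAddGroup.mk_surjective u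

lemma proj_surj_near (u : UnitAddCircle) (a : ℝ) :
    ∃ b : ℝ, a ≤ b ∧ b < a + 1 ∧ circleProj b = u :=
  ⟨AddCircle.equivIco 1 a u, (AddCircle.equivIco 1 a u).2.1, (AddCircle.equivIco 1 a u).2.2,
    AddCircle.coe_equivIco⟩

lemma proj_injOn {a x y : ℝ} (hx : x ∈ Ioc a (a + 1)) (hy : y ∈ Ioc a (a + 1))
    (h : circleProj x = circleProj y) : x = y := by
  obtain ⟨n, hn⟩ := proj_eq_iff.1 h
  have h1 : (n : ℝ) < 1 := by linarith [hx.2, hy.1]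
  have h2 : (-1 : ℝ) < n := by linarith [hx.1, hy.2]
  have h3 : n < 1 := by exact_mod_cast h1
  have h4 : -1 < n := by exact_mod_cast h2
  have : n = 0 := by omega
  subst this
  simpa using hn

lemma measurableSet_arc (a b : ℝ) : MeasurableSet (arc a b) := by
  have : arc a b = ⋃ n : ℕ, circleProj '' Icc (a + 1 / ((n : ℝ) + 1)) b := by
    rw [← image_iUnion]
    unfold arc
    congr 1
    ext x
    simp only [mem_Ioc, mem_iUnion, mem_Icc]
    constructor
    · rintro ⟨h1, h2⟩
      obtain ⟨n, hn⟩ := exists_nat_one_div_lt (sub_pos.2 h1)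
      exact ⟨n, by linarith, h2⟩
    · rintro ⟨n, h1, h2⟩
      have : 0 < 1 / ((n : ℝ) + 1) := by positivity
      exact ⟨by linarith, h2⟩
  rw [this]
  refine MeasurableSet.iUnion fun n => ?_
  exact (isCompact_Icc.image (AddCircle.continuous_mk' 1)).isClosed.measurableSet

variable (ρ : Measure UnitAddCircle) [IsProbabilityMeasure ρ]

/-- measure of arcs. -/
def am (a b : ℝ) : ℝ := ρ.real (arc a b)

lemma am_add {a b c : ℝ} (h1 : a ≤ b) (h2 : b ≤ c) (h3 : c ≤ a + 1) :
    am ρ a b + am ρ b c = am ρ a c := by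
  unfold am
  rw [← measureReal_union _ (measurableSet_arc b c)]
  · congr 1
    unfold arc
    rw [← image_union, Ioc_union_Ioc_eq_Ioc h1 h2]
  · rw [Set.disjoint_left]
    rintro _ ⟨x, hx, rfl⟩ ⟨y, hy, hxy⟩
    have := proj_injOn (a := a) ⟨by linarith [hx.1, hy.1], by linarith [hy.2]⟩
      ⟨by linarith [hx.1], by linarith [hx.2, hy.1]⟩ hxy
    linarith [hx.2, hy.1]

lemma am_self (a : ℝ) : am ρ a a = 0 := by simp [am, arc]

lemma am_one (a : ℝ) : am ρ a (a + 1) = 1 := by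
  have : arc a (a + 1) = univ := by
    refine eq_univ_of_forall fun u => ?_
    exact ⟨AddCircle.equivIoc 1 a u, (AddCircle.equivIoc 1 a u).2, AddCircle.coe_equivIoc⟩
  simp [am, this]

lemma am_shift (a b : ℝ) (n : ℤ) : am ρ (a + n) (b + n) = am ρ a b := by
  have : arc (a + n) (b + n) = arc a b := by
    ext u
    constructor
    · rintro ⟨x, hx, rfl⟩
      exact ⟨x - n, ⟨by linarith [hx.1], by linarith [hx.2]⟩,
        proj_eq_iff.2 ⟨-n, by push_cast; ring⟩⟩
    · rintro ⟨x, hx, rfl⟩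
      exact ⟨x + n, ⟨by linarith [hx.1], by linarith [hx.2]⟩, proj_eq_iff.2 ⟨n, rfl⟩⟩
  simp [am, this]

/-- distribution function. -/
def G (x : ℝ) : ℝ := ⌊x⌋ + am ρ ⌊x⌋ x

lemma G_add_one (x : ℝ) : G ρ (x + 1) = G ρ x + 1 := by
  have := am_shift ρ (⌊x⌋ : ℝ) x 1
  unfold G
  simp only [Int.floor_add_one]
  push_cast at *
  linarith

lemma G_sub {a b : ℝ} (h1 : a ≤ b) (h2 : b < a + 1) : am ρ a b = G ρ b - G ρ a := by
  have ha := Int.floor_le a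
  have ha' := Int.lt_floor_add_one a
  have hb := Int.floor_le b
  have hb' := Int.lt_floor_add_one b
  rcases lt_or_ge b (⌊a⌋ + 1) with hlt | hge
  · have : ⌊b⌋ = ⌊a⌋ := Int.floor_eq_iff.2 ⟨by linarith, hlt⟩
    unfold G
    rw [this, ← am_add ρ ha h1 (by linarith)]
    ring
  · have : ⌊b⌋ = ⌊a⌋ + 1 := Int.floor_eq_iff.2 ⟨by push_cast; linarith, by push_cast; linarith⟩
    unfold G
    rw [this]
    push_cast
    have e1 := am_add ρ ha'.le hge (by linarith)
    have e2 := am_add ρ ha ha'.le le_rfl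
    rw [am_one] at e2
    linarith

lemma G_add_int (x : ℝ) (n : ℤ) : G ρ (x + n) = G ρ x + n := by
  have := am_shift ρ (⌊x⌋ : ℝ) x n
  unfold G
  simp only [Int.floor_add_intCast]
  push_cast at *
  linarith

variable {ρ}

lemma am_pos (hfull : FullSupport ρ) {a b : ℝ} (h : a < b) : 0 < am ρ a b := by
  have h1 : 0 < ρ (circleProj '' Ioo a b) :=
    hfull _ (QuotientAddGroup.isOpenMap_coe _ isOpen_Ioo) ((nonempty_Ioo.2 h).image _)
  have h2 : 0 < ρ (arc a b) := h1.trans_le (measure_mono (image_mono Ioo_subset_Ioc_self))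
  exact ENNReal.toReal_pos h2.ne' (measure_ne_top _ _)

lemma G_strictMono (hfull : FullSupport ρ) : StrictMono (G ρ) := by
  have key : ∀ a b : ℝ, a < b → b < a + 1 → G ρ a < G ρ b := fun a b h1 h2 => by
    have := am_pos hfull h1
    rw [G_sub ρ h1.le h2] at this
    linarith
  intro a b h
  rcases lt_or_ge b (a + 1) with h2 | h2
  · exact key a b h h2
  · have e1 := G_add_int ρ a ⌊b - a⌋
    have h3 := Int.floor_le (b - a)
    have h4 := Int.lt_floor_add_one (b - a)
    have h5 : 1 ≤ ⌊b - a⌋ := Int.le_floor.2 (by push_cast; linarith)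
    have h5' : (1 : ℝ) ≤ ⌊b - a⌋ := by exact_mod_cast h5
    rcases eq_or_lt_of_le (show a + ⌊b - a⌋ ≤ b by linarith) with h6 | h6
    · rw [← h6]; linarith
    · have := key _ _ h6 (by linarith)
      linarith

lemma G_continuous (hat : Atomless ρ) (hfull : FullSupport ρ) : Continuous (G ρ) := by
  have hm := (G_strictMono hfull)
  rw [continuous_iff_continuousAt]
  intro a
  rw [Metric.continuousAt_iff]
  intro ε hε
  have ht := tendsto_measure_cthickening_of_isClosed (μ := ρ) (s := {circleProj a})
    ⟨1, one_pos, measure_ne_top _ _⟩ isClosed_singleton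
  rw [hat] at ht
  have h1 := ht.eventually (gt_mem_nhds (show (0 : ℝ≥0∞) < ENNReal.ofReal ε by simpa using hε))
  rw [Metric.eventually_nhds_iff] at h1
  obtain ⟨δ, hδ, h1⟩ := h1
  set δ' := min (δ / 2) (1 / 4) with hδ'
  have hδ'0 : 0 < δ' := by positivity
  have hδ'1 : δ' ≤ δ / 2 := min_le_left _ _
  have hδ'2 : δ' ≤ 1 / 4 := min_le_right _ _
  have h2 := @h1 δ' (by rw [Real.dist_eq, sub_zero, abs_of_pos hδ'0]; linarith)
  rw [Metric.cthickening_singleton _ hδ'0.le] at h2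
  have h3 : am ρ (a - δ') (a + δ') < ε := by
    unfold am
    rw [Measure.real, ← ENNReal.lt_ofReal_iff_toReal_lt (measure_ne_top _ _)]
    refine lt_of_le_of_lt (measure_mono ?_) h2
    rintro _ ⟨x, hx, rfl⟩
    rw [Metric.mem_closedBall, dist_eq_norm]
    unfold circleProj
    rw [← AddCircle.coe_sub]
    rw [UnitAddCircle.norm_eq]
    refine (round_le (x - a) 0).trans ?_
    rw [Int.cast_zero, sub_zero, abs_le]
    constructor <;> linarith [hx.1, hx.2]
  rw [G_sub ρ (by linarith) (by linarith)] at h3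
  refine ⟨δ', hδ'0, fun {x} hx => ?_⟩
  rw [Real.dist_eq, abs_lt] at hx
  have m1 := hm.monotone (show a - δ' ≤ x by linarith)
  have m2 := hm.monotone (show x ≤ a + δ' by linarith)
  have m3 := hm.monotone (show a - δ' ≤ a by linarith)
  have m4 := hm.monotone (show a ≤ a + δ' by linarith)
  rw [Real.dist_eq, abs_lt]
  constructor <;> linarith

variable (ρ) in
/-- circle map induced by `G`. -/
def g : UnitAddCircle → UnitAddCircle :=
  Function.Periodic.lift (f := fun x => circleProj (G ρ x)) (c := (1 : ℝ)) (fun x => by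
    change circleProj (G ρ (x + 1)) = circleProj (G ρ x)
    rw [G_add_one]; exact proj_eq_iff.2 ⟨1, by simp⟩)

lemma g_coe (x : ℝ) : g ρ (circleProj x) = circleProj (G ρ x) := rfl

lemma g_continuous (hat : Atomless ρ) (hfull : FullSupport ρ) : Continuous (g ρ) := by
  refine continuous_coinduced_dom.2 ?_
  exact (AddCircle.continuous_mk' 1).comp (G_continuous hat hfull)

lemma g_injective (hfull : FullSupport ρ) : Function.Injective (g ρ) := by
  intro u v h
  obtain ⟨x, rfl⟩ := proj_surj u
  obtain ⟨y, rfl⟩ := proj_surj v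
  rw [g_coe, g_coe] at h
  obtain ⟨n, hn⟩ := proj_eq_iff.1 h
  rw [← G_add_int] at hn
  exact proj_eq_iff.2 ⟨n, (G_strictMono hfull).injective hn⟩

variable (ρ) in
/-- measure of the arc from `p.1` to `p.2`. -/
def f (p : UnitAddCircle × UnitAddCircle) : ℝ := AddCircle.equivIco 1 0 (g ρ p.2 - g ρ p.1)

variable (ρ) in
/-- the Lyapunov-type function. -/
def q (p : UnitAddCircle × UnitAddCircle) : ℝ := ‖g ρ p.2 - g ρ p.1‖ * (1 - ‖g ρ p.2 - g ρ p.1‖)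

lemma f_nonneg (p) : 0 ≤ f ρ p := (AddCircle.equivIco 1 0 (g ρ p.2 - g ρ p.1)).2.1

lemma f_lt (p) : f ρ p < 1 := by
  have := (AddCircle.equivIco 1 0 (g ρ p.2 - g ρ p.1)).2.2
  simpa [f] using this

lemma f_measurable (hat : Atomless ρ) (hfull : FullSupport ρ) : Measurable (f ρ) := by
  have hg := (g_continuous hat hfull)
  have h2 : Measurable fun p : UnitAddCircle × UnitAddCircle => g ρ p.2 - g ρ p.1 :=
    ((hg.comp continuous_snd).sub (hg.comp continuous_fst)).measurable
  exact measurable_subtype_coe.comp ((AddCircle.measurableEquivIco 1 0).measurable.comp h2)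

lemma q_continuous (hat : Atomless ρ) (hfull : FullSupport ρ) : Continuous (q ρ) := by
  have hg := (g_continuous hat hfull)
  unfold q
  fun_prop

lemma q_eq_f (p) : q ρ p = f ρ p * (1 - f ρ p) := by
  unfold q
  have h : g ρ p.2 - g ρ p.1 = ((f ρ p : ℝ) : UnitAddCircle) := AddCircle.coe_equivIco.symm
  rw [h, UnitAddCircle.norm_eq]
  have h0 := f_nonneg (ρ := ρ) p
  have h1 := f_lt (ρ := ρ) p
  rcases lt_or_ge (f ρ p) (1 / 2) with h2 | h2
  · have : round (f ρ p) = 0 := by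
      rw [round_eq, Int.floor_eq_iff]; constructor <;> push_cast <;> linarith
    rw [this]; simp [abs_of_nonneg h0]
  · have : round (f ρ p) = 1 := by
      rw [round_eq, Int.floor_eq_iff]; constructor <;> push_cast <;> linarith
    rw [this, abs_of_nonpos (by push_cast; linarith)]; push_cast; ring

lemma q_nonneg (p) : 0 ≤ q ρ p := by
  rw [q_eq_f]
  exact mul_nonneg (f_nonneg p) (by linarith [f_lt (ρ := ρ) p])

lemma q_eq_zero (hfull : FullSupport ρ) {p} (h : q ρ p = 0) : p.1 = p.2 := by
  rw [q_eq_f] at h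
  have h1 := f_lt (ρ := ρ) p
  have h0 : f ρ p = 0 := by
    rcases mul_eq_zero.1 h with h | h
    · exact h
    · linarith
  have h : g ρ p.2 - g ρ p.1 = ((f ρ p : ℝ) : UnitAddCircle) := AddCircle.coe_equivIco.symm
  rw [h0, AddCircle.coe_zero, sub_eq_zero] at h
  exact (g_injective hfull h).symm

lemma f_coe (hfull : FullSupport ρ) {a b : ℝ} (h1 : a ≤ b) (h2 : b < a + 1) :
    f ρ (circleProj a, circleProj b) = ρ.real (arc a b) := by
  have e : am ρ a b = G ρ b - G ρ a := G_sub ρ h1 h2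
  change _ = am ρ a b
  rw [e]
  unfold f
  simp only [g_coe]
  unfold circleProj
  rw [← AddCircle.coe_sub]
  apply AddCircle.equivIco_coe_of_mem
  have m1 := (G_strictMono hfull).monotone h1
  have m2 := (G_strictMono hfull) h2
  rw [G_add_one] at m2
  constructor <;> linarith

lemma image_arc {F : ℝ → ℝ} {h : UnitAddCircle ≃ₜ UnitAddCircle} (hF : StrictMono F)
    (h1 : ∀ x : ℝ, F (x + 1) = F x + 1) (h2 : ∀ x : ℝ, h (circleProj x) = circleProj (F x))
    (a b : ℝ) : h '' arc a b = arc (F a) (F b) := by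
  have hn : ∀ (n : ℕ) (x : ℝ), F (x + n) = F x + n := by
    intro n
    induction n with
    | zero => simp
    | succ n ih =>
      intro x
      push_cast
      rw [← add_assoc, h1, ih]; ring
  have hz : ∀ (n : ℤ) (x : ℝ), F (x + n) = F x + n := by
    intro n x
    obtain ⟨k, rfl | rfl⟩ := n.eq_nat_or_neg
    · exact_mod_cast hn k x
    · have := hn k (x + ((-(k : ℤ) : ℤ) : ℝ))
      push_cast at *
      rw [neg_add_cancel_right] at this
      linarith
  ext u
  constructor
  · rintro ⟨_, ⟨x, hx, rfl⟩, rfl⟩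
    exact ⟨F x, ⟨hF hx.1, hF.monotone hx.2⟩, (h2 x).symm⟩
  · rintro ⟨z, hz', rfl⟩
    obtain ⟨v, hv⟩ := h.surjective (circleProj z)
    obtain ⟨w, rfl⟩ := proj_surj v
    rw [h2] at hv
    obtain ⟨n, hn⟩ := proj_eq_iff.1 hv.symm
    rw [← hz] at hn
    refine ⟨circleProj (w + n), ⟨w + n, ?_, rfl⟩, ?_⟩
    · rw [hn] at hz'
      exact ⟨hF.lt_iff_lt.1 hz'.1, hF.le_iff_le.1 hz'.2⟩
    · rw [h2, ← hn]

lemma f_image (hfull : FullSupport ρ) {h : UnitAddCircle ≃ₜ UnitAddCircle}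
    (hh : OrientPreserving h) {a b : ℝ} (hab : a ≤ b) (hab1 : b < a + 1) :
    f ρ (h (circleProj a), h (circleProj b)) = ρ.real (h '' arc a b) := by
  obtain ⟨F, hF, h1, h2⟩ := hh
  rw [image_arc hF h1 h2, h2, h2]
  refine f_coe hfull (hF.monotone hab) ?_
  rw [← h1]
  exact hF hab1

end CircleAux

namespace RDS

lemma measurable_pair_aux {Ω : Type} [MeasurableSpace Ω] {φ : Ω → UnitAddCircle → UnitAddCircle}
    (h : Measurable (fun p : Ω × UnitAddCircle => φ p.1 p.2))
    (p : UnitAddCircle × UnitAddCircle) : Measurable fun ω => (φ ω p.1, φ ω p.2) := by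
  have h1 : Measurable fun ω : Ω => (ω, p.1) := measurable_id.prodMk measurable_const
  have h2 : Measurable fun ω : Ω => (ω, p.2) := measurable_id.prodMk measurable_const
  exact (h.comp h1).prodMk (h.comp h2)

variable {Ω : Type} [m : MeasurableSpace Ω] (S : RDS Ω)

lemma nonneg_of_mem {t : ℝ} (ht : t ∈ S.T) : 0 ≤ t := by
  rcases S.T_cases with h | h <;> rw [h] at ht
  · obtain ⟨a, rfl⟩ := ht
    simp
  · exact ht

/-- There is a sequence of grids, each refining the previous one, approximating every time
from the right. -/
lemma exists_grid : ∃ h : ℕ → ℝ, (∀ j k : ℕ, (k : ℝ) * h j ∈ S.T) ∧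
    (∀ j, ∃ r : ℕ, h j = r * h (j + 1)) ∧
    (∀ t ∈ S.T, ∃ k : ℕ → ℕ, Antitone (fun n => (k n : ℝ) * h n) ∧
      Tendsto (fun n => (k n : ℝ) * h n) atTop (𝓝 t)) := by
  rcases S.T_cases with h | h
  · refine ⟨fun _ => 1, fun j k => ?_, fun j => ⟨1, by simp⟩, fun t ht => ?_⟩
    · rw [mul_one]; exact S.nat_mem k
    · rw [h] at ht
      obtain ⟨n, rfl⟩ := ht
      exact ⟨fun _ => n, fun _ _ _ => le_rfl, by simp⟩
  · refine ⟨fun j => (2 ^ j)⁻¹, fun j k => ?_, fun j => ⟨2, ?_⟩, fun t ht => ?_⟩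
    · rw [h]
      simp only [mem_Ici]
      positivity
    · change ((2 : ℝ) ^ j)⁻¹ = ((2 : ℕ) : ℝ) * (2 ^ (j + 1))⁻¹
      rw [pow_succ]; push_cast; field_simp
    · have ht0 := S.nonneg_of_mem ht
      refine ⟨fun n => ⌈t * 2 ^ n⌉₊, antitone_nat_of_succ_le fun n => ?_, ?_⟩
      · have h1 : ⌈t * 2 ^ (n + 1)⌉₊ ≤ 2 * ⌈t * 2 ^ n⌉₊ := by
          rw [Nat.ceil_le]
          push_cast
          rw [pow_succ]
          linarith [Nat.le_ceil (t * 2 ^ n)]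
        have h2 : (⌈t * 2 ^ (n + 1)⌉₊ : ℝ) ≤ 2 * ⌈t * 2 ^ n⌉₊ := by exact_mod_cast h1
        calc (⌈t * 2 ^ (n + 1)⌉₊ : ℝ) * (2 ^ (n + 1))⁻¹
            ≤ (2 * ⌈t * 2 ^ n⌉₊) * (2 ^ (n + 1))⁻¹ := by gcongr
          _ = ⌈t * 2 ^ n⌉₊ * (2 ^ n)⁻¹ := by rw [pow_succ]; field_simp
      · have hl : Tendsto (fun n : ℕ => t + ((1 : ℝ) / 2) ^ n) atTop (𝓝 (t + 0)) :=
          tendsto_const_nhds.add (tendsto_pow_atTop_nhds_zero_of_lt_one (by norm_num) (by norm_num))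
        rw [add_zero] at hl
        refine tendsto_of_tendsto_of_tendsto_of_le_of_le tendsto_const_nhds hl ?_ ?_
        · intro n
          change t ≤ _ * _
          rw [← div_eq_mul_inv, le_div_iff₀ (by positivity)]
          exact Nat.le_ceil _
        · intro n
          change _ * _ ≤ t + _
          rw [← div_eq_mul_inv, div_le_iff₀ (by positivity), add_mul, ← mul_pow]
          norm_num
          exact (Nat.ceil_lt_add_one (by positivity)).le

instance : IsProbabilityMeasure S.P := S.P_prob

/-- `Ω` endowed with the future σ-algebra. -/
def Om (_ : RDS Ω) : Type := Ω

instance instOm : MeasurableSpace S.Om := ⨆ s ∈ S.T, S.F s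

/-- the identity map from `Ω` to `Om`. -/
def toOm (ω : Ω) : S.Om := ω

lemma instOm_le : S.instOm ≤ m := iSup₂_le S.F_le

lemma F_le_instOm {t : ℝ} (ht : t ∈ S.T) : S.F t ≤ S.instOm := le_iSup₂_of_le t ht le_rfl

lemma measurable_toOm : Measurable S.toOm := fun A hA => S.instOm_le A hA

/-- two-point motion. -/
def Φ (t : ℝ) (ω : S.Om) (p : UnitAddCircle × UnitAddCircle) : UnitAddCircle × UnitAddCircle :=
  (S.φ t ω p.1, S.φ t ω p.2)

lemma measurable_phi {t : ℝ} (ht : t ∈ S.T) :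
    Measurable (fun p : S.Om × UnitAddCircle => S.φ t p.1 p.2) := by
  refine (S.φ_meas t ht).mono ?_ le_rfl
  exact sup_le_sup (MeasurableSpace.comap_mono (S.F_le_instOm ht)) le_rfl

lemma measurable_Phi {t : ℝ} (ht : t ∈ S.T) :
    Measurable (fun p : S.Om × (UnitAddCircle × UnitAddCircle) => S.Φ t p.1 p.2) := by
  have := S.measurable_phi ht
  exact (this.comp (measurable_fst.prodMk (measurable_fst.comp measurable_snd))).prodMk
    (this.comp (measurable_fst.prodMk (measurable_snd.comp measurable_snd)))

lemma measurable_Phi_F {t : ℝ} (ht : t ∈ S.T) (p : UnitAddCircle × UnitAddCircle) :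
    @Measurable Ω _ (S.F t) _ (fun ω => S.Φ t ω p) := by
  exact @measurable_pair_aux Ω (S.F t) (fun ω => S.φ t ω) (S.φ_meas t ht) p

lemma measurable_Phi' {t : ℝ} (ht : t ∈ S.T) (p : UnitAddCircle × UnitAddCircle) :
    Measurable (fun ω => S.Φ t (S.toOm ω) p) := by
  exact (S.measurable_Phi_F ht p).mono (S.F_le t ht) le_rfl

lemma continuous_Phi (t : ℝ) (ω : S.Om) : Continuous (S.Φ t ω) := by
  have := (S.φ t ω).continuous
  unfold Φ
  fun_prop

lemma Phi_cocycle {s t : ℝ} (hs : s ∈ S.T) (ht : t ∈ S.T) (ω : Ω) (p) :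
    S.Φ (s + t) (S.toOm ω) p = S.Φ t (S.toOm (S.θ s ω)) (S.Φ s (S.toOm ω) p) := by
  unfold Φ toOm
  rw [S.φ_cocycle s hs t ht, S.φ_cocycle s hs t ht]

lemma Phi_zero (ω : S.Om) (p) : S.Φ 0 ω p = p := by
  unfold Φ
  rw [S.φ_zero ω]
  rfl

lemma law_eq {s : ℝ} (hs : s ∈ S.T) (p : UnitAddCircle × UnitAddCircle) :
    S.P.map (fun ω => (S.toOm (S.θ s ω), S.Φ s (S.toOm ω) p)) =
      (S.P.map S.toOm).prod (S.P.map (fun ω => S.Φ s (S.toOm ω) p)) := by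
  have hθ : Measurable fun ω => S.toOm (S.θ s ω) :=
    S.measurable_toOm.comp (S.θ_preserving s hs).measurable
  have hX := S.measurable_Phi' hs p
  have : IsProbabilityMeasure (S.P.map S.toOm) :=
    Measure.isProbabilityMeasure_map S.measurable_toOm.aemeasurable
  have : IsProbabilityMeasure (S.P.map (fun ω => S.Φ s (S.toOm ω) p)) :=
    Measure.isProbabilityMeasure_map hX.aemeasurable
  symm
  refine Measure.prod_eq fun A B hA hB => ?_
  rw [Measure.map_apply (hθ.prodMk hX) (hA.prod hB), Measure.map_apply S.measurable_toOm hA,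
    Measure.map_apply hX hB]
  have := S.θ_indep s hs ((fun ω => S.Φ s ω p) ⁻¹' B) A (S.measurable_Phi_F hs p hB) hA
  rw [mul_comm] at this
  rw [← Set.inter_comm] at this
  exact this

lemma freeze_lintegral {s : ℝ} (hs : s ∈ S.T) (p : UnitAddCircle × UnitAddCircle)
    {H : S.Om × (UnitAddCircle × UnitAddCircle) → ℝ≥0∞} (hH : Measurable H) :
    ∫⁻ ω, H (S.toOm (S.θ s ω), S.Φ s (S.toOm ω) p) ∂S.P =
      ∫⁻ ω, ∫⁻ ω', H (S.toOm ω', S.Φ s (S.toOm ω) p) ∂S.P ∂S.P := by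
  have hθ : Measurable fun ω => S.toOm (S.θ s ω) :=
    S.measurable_toOm.comp (S.θ_preserving s hs).measurable
  have hX := S.measurable_Phi' hs p
  have : IsProbabilityMeasure (S.P.map S.toOm) :=
    Measure.isProbabilityMeasure_map S.measurable_toOm.aemeasurable
  have : IsProbabilityMeasure (S.P.map (fun ω => S.Φ s (S.toOm ω) p)) :=
    Measure.isProbabilityMeasure_map hX.aemeasurable
  rw [← lintegral_map (f := H) hH (hθ.prodMk hX), S.law_eq hs p,
    lintegral_prod_symm _ hH.aemeasurable, lintegral_map hH.lintegral_prod_left' hX]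
  refine lintegral_congr fun ω => ?_
  exact lintegral_map (f := fun x => H (x, S.Φ s (S.toOm ω) p))
    (hH.comp measurable_prodMk_right) S.measurable_toOm

lemma freeze_measure {s : ℝ} (hs : s ∈ S.T) (p : UnitAddCircle × UnitAddCircle)
    {A : Set (S.Om × (UnitAddCircle × UnitAddCircle))} (hA : MeasurableSet A) :
    S.P {ω | (S.toOm (S.θ s ω), S.Φ s (S.toOm ω) p) ∈ A} =
      ∫⁻ ω, S.P {ω' | (S.toOm ω', S.Φ s (S.toOm ω) p) ∈ A} ∂S.P := by
  have hθ : Measurable fun ω => S.toOm (S.θ s ω) :=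
    S.measurable_toOm.comp (S.θ_preserving s hs).measurable
  have hX := S.measurable_Phi' hs p
  have := S.freeze_lintegral hs p (H := A.indicator 1) (measurable_one.indicator hA)
  have e1 : ∫⁻ ω, A.indicator 1 (S.toOm (S.θ s ω), S.Φ s (S.toOm ω) p) ∂S.P =
      S.P {ω | (S.toOm (S.θ s ω), S.Φ s (S.toOm ω) p) ∈ A} := by
    exact lintegral_indicator_one (μ := S.P) ((hθ.prodMk hX) hA)
  have e2 : ∀ x, ∫⁻ ω', A.indicator 1 (S.toOm ω', x) ∂S.P = S.P {ω' | (S.toOm ω', x) ∈ A} := by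
    intro x
    exact lintegral_indicator_one (μ := S.P)
      ((S.measurable_toOm.prodMk (measurable_const (a := x))) hA)
  rw [← e1, this]
  exact lintegral_congr fun ω => e2 _

end RDS

namespace RDS

variable {Ω : Type} [m : MeasurableSpace Ω] (S : RDS Ω)

/-- the two-point semigroup applied to `q`. -/
def Pq (q : UnitAddCircle × UnitAddCircle → ℝ) (t : ℝ) (p : UnitAddCircle × UnitAddCircle) : ℝ :=
  ∫ ω, q (S.Φ t (S.toOm ω) p) ∂S.P

variable {q : UnitAddCircle × UnitAddCircle → ℝ}

lemma exists_bound (hq : Continuous q) : ∃ C, ∀ p, ‖q p‖ ≤ C := by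
  obtain ⟨C, hC⟩ := isCompact_univ.exists_bound_of_continuousOn hq.continuousOn
  exact ⟨C, fun p => hC p (mem_univ p)⟩

lemma integrable_Phi (hq : Continuous q) {t : ℝ} (ht : t ∈ S.T) (p) :
    Integrable (fun ω => q (S.Φ t (S.toOm ω) p)) S.P := by
  obtain ⟨C, hC⟩ := exists_bound hq
  exact Integrable.of_bound (hq.measurable.comp (S.measurable_Phi' ht p)).aestronglyMeasurable C
    (ae_of_all _ fun ω => hC _)

lemma Pq_continuous (hq : Continuous q) {t : ℝ} (ht : t ∈ S.T) : Continuous (S.Pq q t) := by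
  obtain ⟨C, hC⟩ := exists_bound hq
  refine continuous_of_dominated (bound := fun _ => C) (fun p => ?_) (fun p => ?_)
    (integrable_const C) ?_
  · exact (hq.measurable.comp (S.measurable_Phi' ht p)).aestronglyMeasurable
  · exact ae_of_all _ fun ω => hC _
  · exact ae_of_all _ fun ω => hq.comp (S.continuous_Phi t _)

lemma Pq_nonneg (hq0 : ∀ p, 0 ≤ q p) (t p) : 0 ≤ S.Pq q t p := integral_nonneg fun _ => hq0 _

lemma ofReal_Pq (hq : Continuous q) (hq0 : ∀ p, 0 ≤ q p) {t : ℝ} (ht : t ∈ S.T) (p) :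
    ENNReal.ofReal (S.Pq q t p) = ∫⁻ ω, ENNReal.ofReal (q (S.Φ t (S.toOm ω) p)) ∂S.P :=
  ofReal_integral_eq_lintegral_ofReal (S.integrable_Phi hq ht p) (ae_of_all _ fun _ => hq0 _)

lemma Pq_semigroup (hq : Continuous q) (hq0 : ∀ p, 0 ≤ q p) {s t : ℝ} (hs : s ∈ S.T)
    (ht : t ∈ S.T) (p) : S.Pq q (s + t) p = S.Pq (S.Pq q t) s p := by
  have h1 : ENNReal.ofReal (S.Pq q (s + t) p) = ENNReal.ofReal (S.Pq (S.Pq q t) s p) := by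
    rw [S.ofReal_Pq hq hq0 (S.add_mem hs ht),
      S.ofReal_Pq (S.Pq_continuous hq ht) (S.Pq_nonneg hq0 t) hs]
    simp_rw [S.ofReal_Pq hq hq0 ht, S.Phi_cocycle hs ht]
    exact S.freeze_lintegral hs p
      (H := fun x => ENNReal.ofReal (q (S.Φ t x.1 x.2)))
      (ENNReal.measurable_ofReal.comp (hq.measurable.comp (S.measurable_Phi ht)))
  rwa [ENNReal.ofReal_eq_ofReal_iff (S.Pq_nonneg hq0 _ _)
    (S.Pq_nonneg (S.Pq_nonneg hq0 t) _ _)] at h1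

lemma Pq_antitone (hq : Continuous q) (hq0 : ∀ p, 0 ≤ q p)
    (hsup : ∀ t ∈ S.T, ∀ p, S.Pq q t p ≤ q p) {s t : ℝ} (hs : s ∈ S.T)
    (ht : t ∈ S.T) (hst : s ≤ t) (p) : S.Pq q t p ≤ S.Pq q s p := by
  have h := S.sub_mem hs ht hst
  have e := S.Pq_semigroup hq hq0 hs h p
  rw [add_sub_cancel] at e
  rw [e]
  exact integral_mono (S.integrable_Phi (S.Pq_continuous hq h) hs p) (S.integrable_Phi hq hs p)
    fun ω => hsup _ h _

/-- right continuity transfers closed conditions from grids to all times. -/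
lemma grid_closed {h : ℕ → ℝ} (hh : ∀ j k : ℕ, (k : ℝ) * h j ∈ S.T)
    (hap : ∀ t ∈ S.T, ∃ k : ℕ → ℕ, Antitone (fun n => (k n : ℝ) * h n) ∧
      Tendsto (fun n => (k n : ℝ) * h n) atTop (𝓝 t))
    {C : Set (UnitAddCircle × UnitAddCircle)} (hC : IsClosed C) (ω : S.Om) (p)
    (H : ∀ j k : ℕ, S.Φ (k * h j) ω p ∈ C) {t : ℝ} (ht : t ∈ S.T) : S.Φ t ω p ∈ C := by
  obtain ⟨k, hk1, hk2⟩ := hap t ht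
  have h1 := S.φ_cadlag_right ω t ht _ (fun n => hh n (k n)) hk1 hk2 (fun _ => p.1) p.1
    tendsto_const_nhds
  have h2 := S.φ_cadlag_right ω t ht _ (fun n => hh n (k n)) hk1 hk2 (fun _ => p.2) p.2
    tendsto_const_nhds
  exact hC.mem_of_tendsto (h1.prodMk_nhds h2) (Eventually.of_forall fun n => H n (k n))

/-- Key lemma: strict decrease away from the diagonal. -/
lemma strict_decrease (hcon : S.Contractible) (hq : Continuous q) (hq0 : ∀ p, 0 ≤ q p)
    (hqd : ∀ u, q (u, u) = 0)
    (hsup : ∀ t ∈ S.T, ∀ p, S.Pq q t p ≤ q p)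
    (heq : ∀ t ∈ S.T, ∀ p, S.Pq q t p = q p → ∀ᵐ ω ∂S.P, q (S.Φ t (S.toOm ω) p) = q p)
    {ε : ℝ} (hε : 0 < ε) : ∃ N : ℕ, ∀ p, ε ≤ q p → S.Pq q N p < q p := by
  by_contra! hcontra
  let K : ℕ → Set (UnitAddCircle × UnitAddCircle) := fun N => {p | ε ≤ q p ∧ q p ≤ S.Pq q N p}
  have hKc : ∀ N, IsClosed (K N) := fun N =>
    (isClosed_le continuous_const hq).inter (isClosed_le hq (S.Pq_continuous hq (S.nat_mem N)))
  have hKne : (⋂ N, K N).Nonempty := by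
    refine IsCompact.nonempty_iInter_of_sequence_nonempty_isCompact_isClosed K ?_ ?_
      (hKc 0).isCompact hKc
    · intro n p hp
      refine ⟨hp.1, hp.2.trans ?_⟩
      exact S.Pq_antitone hq hq0 hsup (S.nat_mem _) (S.nat_mem _) (by simp) p
    · intro n
      obtain ⟨p, hp⟩ := hcontra n
      exact ⟨p, hp⟩
  have hKcomp : IsCompact (⋂ N, K N) := (isClosed_iInter hKc).isCompact
  obtain ⟨p, hpK, hmin⟩ := hKcomp.exists_isMinOn hKne
    (f := fun p : UnitAddCircle × UnitAddCircle => dist p.1 p.2) (by fun_prop)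
  have hmin' : ∀ r : UnitAddCircle × UnitAddCircle, r ∈ ⋂ N, K N → dist p.1 p.2 ≤ dist r.1 r.2 :=
    fun r hr => isMinOn_iff.1 hmin r hr
  have hpK' : ∀ N, p ∈ K N := fun N => mem_iInter.1 hpK N
  have hne : p.1 ≠ p.2 := by
    intro h
    have h1 := (hpK' 0).1
    have h2 : p = (p.1, p.1) := by ext <;> simp [h]
    rw [h2, hqd] at h1
    linarith
  have hfix : ∀ t ∈ S.T, S.Pq q t p = q p := by
    intro t ht
    refine le_antisymm (hsup t ht p) ?_
    obtain ⟨N, hN⟩ := exists_nat_ge t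
    exact (hpK' N).2.trans (S.Pq_antitone hq hq0 hsup ht (S.nat_mem N) hN p)
  have hinv : ∀ t ∈ S.T, ∀ᵐ ω ∂S.P, S.Φ t (S.toOm ω) p ∈ ⋂ N, K N := by
    intro t ht
    have h1 := heq t ht p (hfix t ht)
    have h2 : ∀ N : ℕ, ∀ᵐ ω ∂S.P, q (S.Φ t (S.toOm ω) p) - S.Pq q N (S.Φ t (S.toOm ω) p) = 0 := by
      intro N
      have hi1 := S.integrable_Phi hq ht p
      have hi2 := S.integrable_Phi (S.Pq_continuous hq (S.nat_mem N)) ht p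
      have h0 : ∫ ω, (q (S.Φ t (S.toOm ω) p) - S.Pq q N (S.Φ t (S.toOm ω) p)) ∂S.P = 0 := by
        rw [integral_sub hi1 hi2]
        change S.Pq q t p - S.Pq (S.Pq q N) t p = 0
        rw [← S.Pq_semigroup hq hq0 ht (S.nat_mem N), hfix t ht,
          hfix _ (S.add_mem ht (S.nat_mem N)), sub_self]
      exact (integral_eq_zero_iff_of_nonneg
        (fun ω => sub_nonneg.2 (hsup N (S.nat_mem N) _)) (hi1.sub hi2)).1 h0
    filter_upwards [h1, ae_all_iff.2 h2] with ω h3 h4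
    refine mem_iInter.2 fun N => ⟨?_, ?_⟩
    · rw [h3]; exact (hpK' 0).1
    · linarith [h4 N]
  obtain ⟨h, hh, -, hap⟩ := S.exists_grid
  have hall : ∀ᵐ ω ∂S.P, ∀ j k : ℕ, S.Φ (k * h j) (S.toOm ω) p ∈ ⋂ N, K N :=
    ae_all_iff.2 fun j => ae_all_iff.2 fun k => hinv _ (hh j k)
  have hall2 : ∀ᵐ ω ∂S.P, ¬ ∃ t ∈ S.T, dist (S.φ t ω p.1) (S.φ t ω p.2) < dist p.1 p.2 := by
    filter_upwards [hall] with ω hω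
    rintro ⟨t, ht, hlt⟩
    have := S.grid_closed hh hap (isClosed_iInter hKc) (S.toOm ω) p hω ht
    have h3 := hmin' (S.Φ t (S.toOm ω) p) this
    exact absurd hlt (not_lt.2 h3)
  have h0 := hcon p.1 p.2 hne
  rw [ae_iff] at hall2
  simp only [not_not] at hall2
  exact h0.ne' hall2

/-- Convergence to zero in probability. -/
lemma tendsto_prob (hcon : S.Contractible) (hq : Continuous q) (hq0 : ∀ p, 0 ≤ q p)
    (hqd : ∀ u, q (u, u) = 0)
    (hsup : ∀ t ∈ S.T, ∀ p, S.Pq q t p ≤ q p)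
    (heq : ∀ t ∈ S.T, ∀ p, S.Pq q t p = q p → ∀ᵐ ω ∂S.P, q (S.Φ t (S.toOm ω) p) = q p)
    {ε : ℝ} (hε : 0 < ε) (p) :
    Tendsto (fun n : ℕ => S.P {ω | ε ≤ q (S.Φ n (S.toOm ω) p)}) atTop (𝓝 0) := by
  obtain ⟨N, hN⟩ := S.strict_decrease hcon hq hq0 hqd hsup heq hε
  have hWc : Continuous fun p => q p - S.Pq q N p := hq.sub (S.Pq_continuous hq (S.nat_mem N))
  have hW0 : ∀ p, 0 ≤ q p - S.Pq q N p := fun p => sub_nonneg.2 (hsup N (S.nat_mem N) p)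
  obtain ⟨c, hc, hcW⟩ : ∃ c > 0, ∀ p, ε ≤ q p → c ≤ q p - S.Pq q N p := by
    have hcomp : IsCompact {p | ε ≤ q p} := (isClosed_le continuous_const hq).isCompact
    rcases Set.eq_empty_or_nonempty {p | ε ≤ q p} with he | hne
    · refine ⟨1, one_pos, fun p hp => ?_⟩
      have : p ∈ {p | ε ≤ q p} := hp
      rw [he] at this
      exact this.elim
    · obtain ⟨p0, hp0, hmin⟩ := hcomp.exists_isMinOn hne hWc.continuousOn
      exact ⟨_, sub_pos.2 (hN p0 hp0), fun p hp => isMinOn_iff.1 hmin p hp⟩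
  -- the sequence of expectations converges
  have hanti : Antitone fun n : ℕ => S.Pq q n p := fun a b hab =>
    S.Pq_antitone hq hq0 hsup (S.nat_mem a) (S.nat_mem b) (by exact_mod_cast hab) p
  have hconv := tendsto_atTop_ciInf hanti
    ⟨0, by rintro _ ⟨n, rfl⟩; exact S.Pq_nonneg hq0 _ _⟩
  have hdiff : Tendsto (fun n : ℕ => (S.Pq q n p - S.Pq q (n + N : ℕ) p) / c) atTop (𝓝 0) := by
    have := (hconv.sub ((tendsto_add_atTop_iff_nat N).2 hconv)).div_const c
    simpa using this
  have hdiff' : Tendsto (fun n : ℕ => ENNReal.ofReal ((S.Pq q n p - S.Pq q (n + N : ℕ) p) / c))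
      atTop (𝓝 0) := by
    have := (ENNReal.continuous_ofReal.tendsto 0).comp hdiff
    rw [ENNReal.ofReal_zero] at this
    exact this
  refine tendsto_of_tendsto_of_tendsto_of_le_of_le tendsto_const_nhds hdiff' (fun _ => zero_le)
    fun n => ?_
  have hi1 := S.integrable_Phi hq (S.nat_mem n) p
  have hi2 := S.integrable_Phi (S.Pq_continuous hq (S.nat_mem N)) (S.nat_mem n) p
  have hint : ∫ ω, (q (S.Φ n (S.toOm ω) p) - S.Pq q N (S.Φ n (S.toOm ω) p)) ∂S.P =
      S.Pq q n p - S.Pq q (n + N : ℕ) p := by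
    rw [integral_sub hi1 hi2]
    push_cast
    rw [S.Pq_semigroup hq hq0 (S.nat_mem n) (S.nat_mem N)]
    rfl
  have hmk := mul_meas_ge_le_integral_of_nonneg
    (f := fun ω => q (S.Φ n (S.toOm ω) p) - S.Pq q N (S.Φ n (S.toOm ω) p))
    (ae_of_all S.P fun ω => hW0 _) (hi1.sub hi2) c
  rw [hint] at hmk
  change S.P {ω | ε ≤ q (S.Φ n (S.toOm ω) p)} ≤ _
  have hsub : S.P {ω | ε ≤ q (S.Φ n (S.toOm ω) p)} ≤
      S.P {ω | c ≤ q (S.Φ n (S.toOm ω) p) - S.Pq q N (S.Φ n (S.toOm ω) p)} :=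
    measure_mono fun ω hω => hcW _ hω
  refine hsub.trans ?_
  rw [ENNReal.le_ofReal_iff_toReal_le (measure_ne_top _ _)]
  · rw [le_div_iff₀ hc, mul_comm]
    exact hmk
  · exact div_nonneg (by rw [← hint]; exact integral_nonneg fun ω => hW0 _) hc.le

/-- Maximal inequality along a grid. -/
lemma maximal_grid (hq : Continuous q) (hq0 : ∀ p, 0 ≤ q p)
    (hsup : ∀ t ∈ S.T, ∀ p, S.Pq q t p ≤ q p) {h : ℝ} (hh : ∀ k : ℕ, (k : ℝ) * h ∈ S.T)
    {l : ℝ} (hl : 0 < l) (n : ℕ) : ∀ p,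
    S.P {ω | ∃ k ≤ n, l < q (S.Φ (k * h) (S.toOm ω) p)} ≤ ENNReal.ofReal (q p / l) := by
  have h1 : h ∈ S.T := by simpa using hh 1
  have triv : ∀ p (A : Set Ω), l < q p → S.P A ≤ ENNReal.ofReal (q p / l) := by
    intro p A hp
    refine prob_le_one.trans ?_
    rw [ENNReal.one_le_ofReal, le_div_iff₀ hl]
    linarith
  induction n with
  | zero =>
    intro p
    by_cases hp : l < q p
    · exact triv p _ hp
    · have : {ω | ∃ k : ℕ, k ≤ 0 ∧ l < q (S.Φ (k * h) (S.toOm ω) p)} = ∅ := by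
        ext ω
        simp only [mem_ofPred_eq, mem_empty_iff_false, iff_false, not_exists, not_and]
        intro k hk
        obtain rfl : k = 0 := by omega
        rw [Nat.cast_zero, zero_mul, S.Phi_zero]
        exact hp
      rw [this]
      simp
  | succ n ih =>
    intro p
    by_cases hp : l < q p
    · exact triv p _ hp
    · let A : Set (S.Om × (UnitAddCircle × UnitAddCircle)) :=
        {x | ∃ k ≤ n, l < q (S.Φ (k * h) x.1 x.2)}
      have hA : MeasurableSet A := by
        have : A = ⋃ k : ℕ, ⋃ _ : k ≤ n, {x | l < q (S.Φ (k * h) x.1 x.2)} := by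
          ext x; simp [A]
        rw [this]
        refine MeasurableSet.iUnion fun k => MeasurableSet.iUnion fun _ => ?_
        exact measurableSet_lt measurable_const (hq.measurable.comp (S.measurable_Phi (hh k)))
      have hsub : {ω | ∃ k ≤ n + 1, l < q (S.Φ (k * h) (S.toOm ω) p)} ⊆
          {ω | (S.toOm (S.θ h ω), S.Φ h (S.toOm ω) p) ∈ A} := by
        rintro ω ⟨k, hk, hlt⟩
        rcases k with _ | k
        · simp [S.Phi_zero] at hlt
          exact absurd hlt hp
        · refine ⟨k, by omega, ?_⟩
          have e : ((k + 1 : ℕ) : ℝ) * h = h + k * h := by push_cast; ring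
          rw [e, S.Phi_cocycle h1 (hh k)] at hlt
          exact hlt
      refine (measure_mono hsub).trans ?_
      rw [S.freeze_measure h1 p hA]
      calc ∫⁻ ω, S.P {ω' | (S.toOm ω', S.Φ h (S.toOm ω) p) ∈ A} ∂S.P
          ≤ ∫⁻ ω, ENNReal.ofReal (q (S.Φ h (S.toOm ω) p) / l) ∂S.P := lintegral_mono fun ω => ih _
        _ = ENNReal.ofReal (∫ ω, q (S.Φ h (S.toOm ω) p) / l ∂S.P) :=
          (ofReal_integral_eq_lintegral_ofReal ((S.integrable_Phi hq h1 p).div_const l)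
            (ae_of_all _ fun _ => div_nonneg (hq0 _) hl.le)).symm
        _ ≤ ENNReal.ofReal (q p / l) := by
          rw [integral_div]
          exact ENNReal.ofReal_le_ofReal (div_le_div_of_nonneg_right (hsup h h1 p) hl.le)

/-- Maximal inequality along all grids. -/
lemma maximal (hq : Continuous q) (hq0 : ∀ p, 0 ≤ q p)
    (hsup : ∀ t ∈ S.T, ∀ p, S.Pq q t p ≤ q p) {h : ℕ → ℝ}
    (hh : ∀ j k : ℕ, (k : ℝ) * h j ∈ S.T) (href : ∀ j, ∃ r : ℕ, h j = r * h (j + 1))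
    {l : ℝ} (hl : 0 < l) (p) :
    S.P {ω | ∃ j k : ℕ, l < q (S.Φ (k * h j) (S.toOm ω) p)} ≤ ENNReal.ofReal (q p / l) := by
  have e1 : {ω | ∃ j k : ℕ, l < q (S.Φ (k * h j) (S.toOm ω) p)} =
      ⋃ j : ℕ, {ω | ∃ k : ℕ, l < q (S.Φ (k * h j) (S.toOm ω) p)} := by
    ext; simp
  have hmono : Monotone fun j : ℕ => {ω | ∃ k : ℕ, l < q (S.Φ (k * h j) (S.toOm ω) p)} := by
    refine monotone_nat_of_le_succ fun j => ?_
    rintro ω ⟨k, hk⟩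
    obtain ⟨r, hr⟩ := href j
    refine ⟨k * r, ?_⟩
    rw [hr, ← mul_assoc] at hk
    push_cast
    exact hk
  rw [e1, hmono.measure_iUnion]
  refine iSup_le fun j => ?_
  have e2 : {ω | ∃ k : ℕ, l < q (S.Φ (k * h j) (S.toOm ω) p)} =
      ⋃ n : ℕ, {ω | ∃ k ≤ n, l < q (S.Φ (k * h j) (S.toOm ω) p)} := by
    ext ω
    simp only [mem_ofPred_eq, mem_iUnion]
    exact ⟨fun ⟨k, hk⟩ => ⟨k, k, le_rfl, hk⟩, fun ⟨n, k, _, hk⟩ => ⟨k, hk⟩⟩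
  have hmono2 : Monotone fun n : ℕ => {ω | ∃ k ≤ n, l < q (S.Φ (k * h j) (S.toOm ω) p)} := by
    rintro a b hab ω ⟨k, hk, hlt⟩
    exact ⟨k, hk.trans hab, hlt⟩
  rw [e2, hmono2.measure_iUnion]
  exact iSup_le fun n => S.maximal_grid hq hq0 hsup (hh j) hl n p

end RDS

namespace RDS

variable {Ω : Type} [m : MeasurableSpace Ω] (S : RDS Ω)
variable {q : UnitAddCircle × UnitAddCircle → ℝ}

lemma escape_null (hcon : S.Contractible) (hq : Continuous q) (hq0 : ∀ p, 0 ≤ q p)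
    (hqd : ∀ u, q (u, u) = 0)
    (hsup : ∀ t ∈ S.T, ∀ p, S.Pq q t p ≤ q p)
    (heq : ∀ t ∈ S.T, ∀ p, S.Pq q t p = q p → ∀ᵐ ω ∂S.P, q (S.Φ t (S.toOm ω) p) = q p)
    {h : ℕ → ℝ} (hh : ∀ j k : ℕ, (k : ℝ) * h j ∈ S.T)
    (href : ∀ j, ∃ r : ℕ, h j = r * h (j + 1)) {l : ℝ} (hl : 0 < l) (p) :
    S.P {ω | ∀ n : ℕ, ∃ j k : ℕ,
      l < q (S.Φ (k * h j) (S.toOm (S.θ n ω)) (S.Φ n (S.toOm ω) p))} = 0 := by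
  let A : Set (S.Om × (UnitAddCircle × UnitAddCircle)) :=
    {x | ∃ j k : ℕ, l < q (S.Φ (k * h j) x.1 x.2)}
  have hA : MeasurableSet A := by
    have : A = ⋃ j : ℕ, ⋃ k : ℕ, {x | l < q (S.Φ (k * h j) x.1 x.2)} := by
      ext x; simp [A]
    rw [this]
    refine MeasurableSet.iUnion fun j => MeasurableSet.iUnion fun k => ?_
    exact measurableSet_lt measurable_const (hq.measurable.comp (S.measurable_Phi (hh j k)))
  have key : ∀ ε > 0, ∀ n : ℕ, S.P {ω | ∀ n : ℕ, ∃ j k : ℕ,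
      l < q (S.Φ (k * h j) (S.toOm (S.θ n ω)) (S.Φ n (S.toOm ω) p))} ≤
      S.P {ω | ε ≤ q (S.Φ n (S.toOm ω) p)} + ENNReal.ofReal (ε / l) := by
    intro ε hε n
    have h1 : S.P {ω | ∀ n : ℕ, ∃ j k : ℕ,
        l < q (S.Φ (k * h j) (S.toOm (S.θ n ω)) (S.Φ n (S.toOm ω) p))} ≤
        S.P {ω | (S.toOm (S.θ n ω), S.Φ n (S.toOm ω) p) ∈ A} := measure_mono fun ω hω => hω n
    refine h1.trans ?_
    rw [S.freeze_measure (S.nat_mem n) p hA]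
    have hB : MeasurableSet {ω | ε ≤ q (S.Φ n (S.toOm ω) p)} :=
      measurableSet_le measurable_const (hq.measurable.comp (S.measurable_Phi' (S.nat_mem n) p))
    calc ∫⁻ ω, S.P {ω' | (S.toOm ω', S.Φ n (S.toOm ω) p) ∈ A} ∂S.P
        ≤ ∫⁻ ω, ({ω | ε ≤ q (S.Φ n (S.toOm ω) p)}.indicator 1 ω + ENNReal.ofReal (ε / l)) ∂S.P := by
          refine lintegral_mono fun ω => ?_
          by_cases hω : ε ≤ q (S.Φ n (S.toOm ω) p)
          · rw [indicator_of_mem (by exact hω)]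
            exact prob_le_one.trans le_self_add
          · refine le_trans ?_ le_add_self
            refine (S.maximal hq hq0 hsup hh href hl _).trans ?_
            refine ENNReal.ofReal_le_ofReal (div_le_div_of_nonneg_right ?_ hl.le)
            exact (not_le.1 hω).le
      _ = _ := by
          rw [lintegral_add_right _ measurable_const, lintegral_indicator_one hB]
          simp
  have key2 : ∀ ε > 0, S.P {ω | ∀ n : ℕ, ∃ j k : ℕ,
      l < q (S.Φ (k * h j) (S.toOm (S.θ n ω)) (S.Φ n (S.toOm ω) p))} ≤ ENNReal.ofReal (ε / l) := by
    intro ε hε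
    have := (S.tendsto_prob hcon hq hq0 hqd hsup heq hε p).add_const (ENNReal.ofReal (ε / l))
    rw [zero_add] at this
    exact ge_of_tendsto' this (key ε hε)
  refine le_antisymm (ENNReal.le_of_forall_pos_le_add fun δ hδ _ => ?_) zero_le
  rw [zero_add]
  have := key2 (δ * l) (by positivity)
  rwa [mul_div_cancel_right₀ _ hl.ne', ENNReal.ofReal_coe_nnreal] at this

lemma synchronising_of_q (hcon : S.Contractible) (hq : Continuous q) (hq0 : ∀ p, 0 ≤ q p)
    (hqd : ∀ u, q (u, u) = 0) (hqz : ∀ p, q p = 0 → p.1 = p.2)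
    (hsup : ∀ t ∈ S.T, ∀ p, S.Pq q t p ≤ q p)
    (heq : ∀ t ∈ S.T, ∀ p, S.Pq q t p = q p → ∀ᵐ ω ∂S.P, q (S.Φ t (S.toOm ω) p) = q p) :
    S.Synchronising := by
  intro x y
  obtain ⟨h, hh, href, hap⟩ := S.exists_grid
  have hae : ∀ᵐ ω ∂S.P, ∀ i : ℕ, ∃ n : ℕ, ∀ j k : ℕ,
      q (S.Φ (k * h j) (S.toOm (S.θ n ω)) (S.Φ n (S.toOm ω) (x, y))) ≤ 1 / ((i : ℝ) + 1) := by
    refine ae_all_iff.2 fun i => ?_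
    have := S.escape_null hcon hq hq0 hqd hsup heq hh href
      (l := 1 / ((i : ℝ) + 1)) (by positivity) (x, y)
    rw [ae_iff]
    push Not
    exact this
  have hfin : ∀ᵐ ω ∂S.P,
      Tendsto (fun t => dist (S.φ t ω x) (S.φ t ω y)) S.tFilter (𝓝 0) := by
    filter_upwards [hae] with ω hω
    have hqlim : ∀ δ > 0, ∀ᶠ t in S.tFilter, q (S.Φ t (S.toOm ω) (x, y)) < δ := by
      intro δ hδ
      obtain ⟨i, hi⟩ := exists_nat_one_div_lt hδ
      obtain ⟨n, hn⟩ := hω i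
      unfold tFilter
      rw [eventually_inf_principal]
      filter_upwards [eventually_ge_atTop (n : ℝ)] with t htn ht
      have hmem := S.sub_mem (S.nat_mem n) ht htn
      have h1 := S.grid_closed hh hap (C := {p | q p ≤ 1 / ((i : ℝ) + 1)})
        (isClosed_le hq continuous_const) (S.toOm (S.θ n ω)) (S.Φ n (S.toOm ω) (x, y)) hn hmem
      rw [← S.Phi_cocycle (S.nat_mem n) hmem, add_sub_cancel] at h1
      exact lt_of_le_of_lt h1 hi
    rw [Metric.tendsto_nhds]
    intro ε hε
    -- `q` is bounded below away from the diagonal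
    obtain ⟨δ, hδ, hδq⟩ : ∃ δ > 0, ∀ p : UnitAddCircle × UnitAddCircle,
        ε ≤ dist p.1 p.2 → δ ≤ q p := by
      have hcl : IsClosed {p : UnitAddCircle × UnitAddCircle | ε ≤ dist p.1 p.2} :=
        isClosed_le continuous_const (by fun_prop)
      rcases Set.eq_empty_or_nonempty {p : UnitAddCircle × UnitAddCircle | ε ≤ dist p.1 p.2}
        with he | hne
      · refine ⟨1, one_pos, fun p hp => ?_⟩
        have : p ∈ {p : UnitAddCircle × UnitAddCircle | ε ≤ dist p.1 p.2} := hp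
        rw [he] at this
        exact this.elim
      · obtain ⟨p0, hp0, hmin⟩ := hcl.isCompact.exists_isMinOn hne hq.continuousOn
        refine ⟨q p0, lt_of_le_of_ne (hq0 p0) fun h0 => ?_, fun p hp => isMinOn_iff.1 hmin p hp⟩
        have h1 := hqz p0 h0.symm
        have h2 : ε ≤ dist p0.1 p0.2 := hp0
        rw [h1, dist_self] at h2
        linarith
    filter_upwards [hqlim δ hδ] with t ht
    rw [Real.dist_eq, sub_zero, abs_of_nonneg dist_nonneg]
    by_contra hcon'
    exact absurd ht (not_lt.2 (hδq (S.Φ t (S.toOm ω) (x, y)) (not_lt.1 hcon')))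
  have e : S.P {ω | Tendsto (fun t => dist (S.φ t ω x) (S.φ t ω y)) S.tFilter (𝓝 0)} =
      S.P univ := measure_congr (eventuallyEq_univ.2 hfin)
  rw [e, measure_univ]

open CircleAux in
lemma integral_f {ρ : Measure UnitAddCircle} [IsProbabilityMeasure ρ] (hat : Atomless ρ)
    (hfull : FullSupport ρ) (hstat : S.ReverseStationary ρ) {t : ℝ} (ht : t ∈ S.T) (p) :
    ∫ ω, f ρ (S.Φ t (S.toOm ω) p) ∂S.P = f ρ p := by
  obtain ⟨u, v⟩ := p
  obtain ⟨a, rfl⟩ := proj_surj u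
  obtain ⟨b, hab, hab1, rfl⟩ := proj_surj_near v a
  rw [integral_eq_lintegral_of_nonneg_ae (ae_of_all _ fun _ => f_nonneg _)
    ((f_measurable hat hfull).comp (S.measurable_Phi' ht _)).aestronglyMeasurable,
    f_coe hfull hab hab1, Measure.real, hstat t ht _ (measurableSet_arc a b)]
  congr 1
  refine lintegral_congr fun ω => ?_
  have := f_image hfull (S.φ_orient t ht ω) hab hab1
  change ENNReal.ofReal (f ρ (S.φ t ω (circleProj a), S.φ t ω (circleProj b))) = _
  rw [this, Measure.real, ENNReal.ofReal_toReal (measure_ne_top _ _)]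

open CircleAux in
lemma variance_q {ρ : Measure UnitAddCircle} [IsProbabilityMeasure ρ] (hat : Atomless ρ)
    (hfull : FullSupport ρ) (hstat : S.ReverseStationary ρ) {t : ℝ} (ht : t ∈ S.T) (p) :
    Integrable (fun ω => (f ρ (S.Φ t (S.toOm ω) p) - f ρ p) ^ 2) S.P ∧
    ∫ ω, (f ρ (S.Φ t (S.toOm ω) p) - f ρ p) ^ 2 ∂S.P = CircleAux.q ρ p - S.Pq (CircleAux.q ρ) t p := by
  have hY := (f_measurable hat hfull).comp (S.measurable_Phi' ht p)
  have hYi : Integrable (fun ω => f ρ (S.Φ t (S.toOm ω) p)) S.P := by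
    refine Integrable.of_bound hY.aestronglyMeasurable 1 (ae_of_all _ fun ω => ?_)
    rw [Real.norm_of_nonneg (f_nonneg _)]
    exact (f_lt _).le
  have hqi := S.integrable_Phi (q_continuous hat hfull) ht p
  have hE := S.integral_f hat hfull hstat ht p
  have e : (fun ω => (f ρ (S.Φ t (S.toOm ω) p) - f ρ p) ^ 2) = fun ω =>
      ((1 - 2 * f ρ p) * f ρ (S.Φ t (S.toOm ω) p) - CircleAux.q ρ (S.Φ t (S.toOm ω) p))
        + f ρ p ^ 2 := by
    funext ω
    rw [q_eq_f]
    ring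
  rw [e]
  have hi1 : Integrable (fun ω => (1 - 2 * f ρ p) * f ρ (S.Φ t (S.toOm ω) p) -
      CircleAux.q ρ (S.Φ t (S.toOm ω) p)) S.P := (hYi.const_mul (1 - 2 * f ρ p)).sub hqi
  refine ⟨hi1.add (integrable_const _), ?_⟩
  rw [integral_add hi1 (integrable_const _), integral_sub (hYi.const_mul _) hqi,
    integral_const_mul, hE, q_eq_f p]
  simp only [integral_const, probReal_univ, smul_eq_mul, Pq]
  ring

end RDS

/-- if `φ` is contractible and admits an atomless reverse-stationary probability
measure of full support, then `φ` is synchronising. -/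
theorem contractible_atomless_fullSupport_reverseStationary_synchronising
    {Ω : Type} [MeasurableSpace Ω] (S : RDS Ω) (h : S.Contractible)
    (ρ : Measure UnitAddCircle) [IsProbabilityMeasure ρ]
    (hatomless : Atomless ρ) (hfull : FullSupport ρ) (hstat : S.ReverseStationary ρ) :
    S.Synchronising := by
  refine S.synchronising_of_q h (CircleAux.q_continuous hatomless hfull) CircleAux.q_nonneg
    (fun u => by simp [CircleAux.q]) (fun p hp => CircleAux.q_eq_zero hfull hp) ?_ ?_
  · intro t ht p
    have h1 := (S.variance_q hatomless hfull hstat ht p).2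
    have h2 : 0 ≤ ∫ ω, (CircleAux.f ρ (S.Φ t (S.toOm ω) p) - CircleAux.f ρ p) ^ 2 ∂S.P :=
      integral_nonneg fun _ => sq_nonneg _
    linarith
  · intro t ht p hp
    obtain ⟨hi, h1⟩ := S.variance_q hatomless hfull hstat ht p
    rw [hp, sub_self] at h1
    have h2 := (integral_eq_zero_iff_of_nonneg (fun _ => sq_nonneg _) hi).1 h1
    filter_upwards [h2] with ω hω
    have h3 : CircleAux.f ρ (S.Φ t (S.toOm ω) p) - CircleAux.f ρ p = 0 := pow_eq_zero_iff two_ne_zero |>.1 hω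
    rw [CircleAux.q_eq_f, CircleAux.q_eq_f, sub_eq_zero.1 h3]
end
end
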